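/- Let c > 0 be arbitrary. There exist constants C, A < ∞, depending only on d and c, with the following property: if ε > 0 and E, E* ⊆ ℝ^d are Lebesgue measurable sets of positive finite measure satisfying ⟨T₀(χ_{E*}), χ_E⟩ ≥ ε Λ₀(|E|, |E*|), and moreover |E| ≥ c |E*|^d and |E*| ≥ c |E|^d, then there exists a ball ℬ = ℬ(z̄, e, r, r*) such that the associated pair (B, B*) = (π(ℬ), π*(ℬ)) satisfies ⟨T₀(χ_{E* ∩ B*}), χ_{E ∩ B}⟩ ≥ C^{−1} ε^A ⟨T₀(χ_{E*}), χ_E⟩, with |B| ≤ C|E| and |B*| ≤ C|E*|. -/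

import Mathlib

open MeasureTheory ENNReal
open scoped RealInnerProductSpace

noncomputable section

/-- `ℝ^{d-1}` -/
abbrev Vec (n : ℕ) : Type := EuclideanSpace ℝ (Fin n)

/-- `ℝ^d = ℝ^{d-1} × ℝ`, a point `x = (x', x_d)` -/
abbrev Pt (n : ℕ) : Type := Vec n × ℝ

/-- The Radon-like transform `Tf(x) = ∫_{ℝ^{d-1}} f(x' - t, x_d - |t|²) dt`. -/
def radonT (n : ℕ) (f : Pt n → ℝ≥0∞) (x : Pt n) : ℝ≥0∞ :=
  ∫⁻ t : Vec n, f (x.1 - t, x.2 - ‖t‖ ^ 2)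

/-- The incidence functional `𝒯(E, E*) = ∫_E T(χ_{E*})`. -/
def incT (n : ℕ) (E Estar : Set (Pt n)) : ℝ≥0∞ :=
  ∫⁻ x in E, radonT n (Estar.indicator 1) x

/-- Admissibility of the parameters of a ball `ℬ(z̄, e, r, r*)`:
the center `z̄ = (x̄, x̄*)` lies on the incidence manifold `ℐ`, `ρ > 0`,
`e` is an orthonormal basis of `ℝ^{d-1}`, and `r_j r*_j = ρ > 0` for all `j`. -/
def IsBallParams (n : ℕ) (zb : Pt n × Pt n) (e : Fin n → Vec n)
    (r rs : Fin n → ℝ) (ρ : ℝ) : Prop :=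
  zb.2.2 = zb.1.2 - ‖zb.2.1 - zb.1.1‖ ^ 2 ∧ 0 < ρ ∧ Orthonormal ℝ e ∧
    (∀ j, 0 < r j) ∧ (∀ j, 0 < rs j) ∧ (∀ j, r j * rs j = ρ)

/-- The ball `ℬ(z̄, e, r, r*)`, a subset of the incidence manifold
`ℐ = {(x,y) : y_d = x_d - |y' - x'|²} ⊆ ℝ^d × ℝ^d`. -/
def ballI (n : ℕ) (zb : Pt n × Pt n) (e : Fin n → Vec n)
    (r rs : Fin n → ℝ) (ρ : ℝ) : Set (Pt n × Pt n) :=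
  fun z => z.2.2 = z.1.2 - ‖z.2.1 - z.1.1‖ ^ 2 ∧
    (∀ j, |⟪z.1.1 - zb.1.1, e j⟫| < r j) ∧
    |z.1.2 - zb.2.2 - ‖z.1.1 - zb.2.1‖ ^ 2| < ρ ∧
    (∀ j, |⟪z.2.1 - zb.2.1, e j⟫| < rs j) ∧
    |z.2.2 - zb.1.2 + ‖z.2.1 - zb.1.1‖ ^ 2| < ρ

/-- The localized Radon-like transform
`T₀f(x) = ∫_{|t| ≤ 1} f(x' - t, x_d - |t|²) dt`. -/
def radonT0 (n : ℕ) (f : Pt n → ℝ≥0∞) (x : Pt n) : ℝ≥0∞ :=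
  ∫⁻ t in Metric.closedBall (0 : Vec n) 1, f (x.1 - t, x.2 - ‖t‖ ^ 2)

/-- The localized incidence functional `⟨T₀(χ_{E*}), χ_E⟩`. -/
def incT0 (n : ℕ) (E Estar : Set (Pt n)) : ℝ≥0∞ :=
  ∫⁻ x in E, radonT0 n (Estar.indicator 1) x

/-- `Λ₀(t, t*) = sup {⟨T₀(χ_{E*}), χ_E⟩ : |E| = t, |E*| = t*}`. -/
def Lam0 (n : ℕ) (t ts : ℝ≥0∞) : ℝ≥0∞ :=
  ⨆ (E : Set (Pt n)) (Es : Set (Pt n)) (_ : MeasurableSet E) (_ : MeasurableSet Es)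
    (_ : volume E = t) (_ : volume Es = ts), incT0 n E Es

/-!
The shears `(x', u) ↦ (x', u + |x'|²)` and `(y', v) ↦ (y', -v - |y'|²)` turn the incidence relation
`y_d = x_d - |y' - x'|²` into the bilinear relation `u + v + 2⟪x', y'⟫ = 0`, and
`⟨T₀(χ_{E*}), χ_E⟩` into the volume `τ` of a set `G` of incidences.

Pairing the vectors `Y₁, …, Y_{d-1}` joining `d` points of one fibre of `G` with `x'` is a change of
variables of Jacobian `|det Y|`, so the integral of `|det Y|` over the fibres of `G` is at most
`|E*|^d`. On the other hand, choosing medians successively in orthogonal directions finds for every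
fibre an orthonormal frame and a box of volume controlled by `∫ |det Y|` that contains a fixed
proportion of the fibre. Hence a typical fibre meets a box with sides `s i` whose volume is bounded
above, and also below because the fibre is large. The dual box, with sides `T / s i`, contains a
proportion `ε ^ O(1)` of the first components of `G`: incidences outside it live in thin slabs and
are too few. A second refinement bounds the other components as well, and pigeonholing into cells
of the scaled box produces the ball.

For comparable measures the Knapp example gives `Λ₀(t, t*) ≳ (t t*)^{d/(d+1)}`, so that a
quasiextremal pair satisfies `τ^{d+1} ≥ ε^{O(1)} (|E| |E*|)^d`.
-/

section CoordinateBox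

variable {ι V : Type*} [Fintype ι] [NormedAddCommGroup V] [InnerProductSpace ℝ V]

/-- The closed box of half-widths `s i` around `x₀` with sides along the orthonormal basis `e`. -/
def coordBox (e : OrthonormalBasis ι ℝ V) (x₀ : V) (s : ι → ℝ) : Set V :=
  {x | ∀ i, |⟪x - x₀, e i⟫| ≤ s i}

theorem coordBox_eq_preimage_pi (e : OrthonormalBasis ι ℝ V) (x₀ : V) (s : ι → ℝ) :
    coordBox e x₀ s =
      (fun x i ↦ ⟪x - x₀, e i⟫) ⁻¹' Set.univ.pi fun i ↦ Set.Icc (-s i) (s i) := by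
  ext x
  simp only [coordBox, abs_le, Set.mem_ofPred_eq, Set.mem_preimage, Set.mem_univ_pi, Set.mem_Icc]

theorem coordBox_mono {e : OrthonormalBasis ι ℝ V} {x₀ : V} {s t : ι → ℝ} (h : s ≤ t) :
    coordBox e x₀ s ⊆ coordBox e x₀ t :=
  fun _ hx i ↦ (hx i).trans (h i)

theorem abs_inner_sub_le_of_mem_coordBox {e : OrthonormalBasis ι ℝ V} {x₀ y₀ x y : V}
    {p q : ι → ℝ} {K : ℝ} (hx : x ∈ coordBox e x₀ p) (hy : y ∈ coordBox e y₀ q)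
    (hpq : ∀ i, p i * q i ≤ K) : |⟪x - x₀, y - y₀⟫| ≤ Fintype.card ι * K := by
  rw [← e.sum_inner_mul_inner]
  refine (Finset.abs_sum_le_sum_abs _ _).trans ?_
  calc ∑ i, |⟪x - x₀, e i⟫ * ⟪e i, y - y₀⟫| ≤ ∑ _i : ι, K := Finset.sum_le_sum fun i _ ↦ by
        rw [abs_mul, real_inner_comm (y - y₀)]
        exact (mul_le_mul (hx i) (hy i) (abs_nonneg _) ((abs_nonneg _).trans (hx i))).trans (hpq i)
    _ = Fintype.card ι * K := by rw [Finset.sum_const, Finset.card_univ, nsmul_eq_mul]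

theorem ofReal_abs_mul_volume_pi_slab_le [DecidableEq ι] (s a : ι → ℝ) (j : ι) (b : ℝ)
    (S : Set ℝ) :
    ENNReal.ofReal |a j| * volume ((Set.univ.pi fun i ↦ Set.Icc (-s i) (s i)) ∩
        (fun y ↦ b + ∑ i, a i * y i) ⁻¹' S)
      ≤ (∏ i ∈ Finset.univ.erase j, ENNReal.ofReal (2 * s i)) * volume S := by
  set A := (Set.univ.pi fun i ↦ Set.Icc (-s i) (s i)) ∩ (fun y ↦ b + ∑ i, a i * y i) ⁻¹' S
  -- `L` replaces the `j`-th coordinate of `y` by `∑ i, a i * y i`.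
  set L := Matrix.toLin' (Matrix.updateRow 1 j a)
  have det_L : LinearMap.det L = a j := by
    rw [LinearMap.det_toLin', ← Matrix.det_transpose, ← Matrix.updateCol_transpose,
      Matrix.transpose_one, ← Matrix.cramer_apply, Matrix.cramer_one, Module.End.one_apply]
  have image_subset : L '' A ⊆ Set.univ.pi (Function.update (fun i ↦ Set.Icc (-s i) (s i)) j
      ((b + ·) ⁻¹' S)) := by
    rintro _ ⟨y, ⟨hy, hyS⟩, rfl⟩ i _
    rcases eq_or_ne i j with rfl | hij
    · simpa [L, Matrix.mulVec, dotProduct] using hyS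
    · simpa [L, Matrix.mulVec, dotProduct, Matrix.one_apply, hij] using hy i (Set.mem_univ i)
  calc ENNReal.ofReal |a j| * volume A = volume (L '' A) := by
        rw [Measure.addHaar_image_linearMap, det_L]
    _ ≤ _ := measure_mono image_subset
    _ = volume S * ∏ i ∈ Finset.univ.erase j, ENNReal.ofReal (2 * s i) := by
      rw [volume_pi_pi, ← Finset.mul_prod_erase _ _ (Finset.mem_univ j), Function.update_self,
        measure_preimage_add]
      congr 1
      refine Finset.prod_congr rfl fun i hi ↦ ?_
      rw [Function.update_of_ne (Finset.ne_of_mem_erase hi), Real.volume_Icc, sub_neg_eq_add,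
        two_mul]
    _ = _ := mul_comm _ _

variable [FiniteDimensional ℝ V] [MeasurableSpace V] [BorelSpace V]

theorem measurePreserving_inner_sub (e : OrthonormalBasis ι ℝ V) (x₀ : V) :
    MeasurePreserving (fun (x : V) i ↦ ⟪x - x₀, e i⟫) volume volume := by
  have h := ((PiLp.volume_preserving_ofLp ι).comp e.measurePreserving_repr).comp
    (measurePreserving_sub_right volume x₀)
  have coord_eq : (WithLp.ofLp ∘ ⇑e.repr) ∘ (fun x ↦ x - x₀) = fun x i ↦ ⟪x - x₀, e i⟫ := by
    funext x i
    simp only [Function.comp_apply, OrthonormalBasis.repr_apply_apply, real_inner_comm]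
  rwa [coord_eq] at h

theorem measurableSet_coordBox (e : OrthonormalBasis ι ℝ V) (x₀ : V) (s : ι → ℝ) :
    MeasurableSet (coordBox e x₀ s) := by
  rw [coordBox_eq_preimage_pi]
  exact (measurePreserving_inner_sub e x₀).measurable
    (MeasurableSet.univ_pi fun _ ↦ measurableSet_Icc)

theorem volume_coordBox (e : OrthonormalBasis ι ℝ V) (x₀ : V) (s : ι → ℝ) :
    volume (coordBox e x₀ s) = ∏ i, ENNReal.ofReal (2 * s i) := by
  rw [coordBox_eq_preimage_pi, (measurePreserving_inner_sub e x₀).measure_preimage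
    (MeasurableSet.univ_pi fun _ ↦ measurableSet_Icc).nullMeasurableSet, volume_pi_pi]
  simp only [Real.volume_Icc, sub_neg_eq_add, two_mul]

theorem ofReal_abs_inner_mul_volume_slab_le [DecidableEq ι] (e : OrthonormalBasis ι ℝ V)
    (y₀ : V) (s : ι → ℝ) (a : V) (j : ι) (b : ℝ) {S : Set ℝ} (hS : MeasurableSet S) :
    ENNReal.ofReal |⟪a, e j⟫| * volume {y ∈ coordBox e y₀ s | b + ⟪a, y - y₀⟫ ∈ S}
      ≤ (∏ i ∈ Finset.univ.erase j, ENNReal.ofReal (2 * s i)) * volume S := by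
  have measurableSet_slab : MeasurableSet ((Set.univ.pi fun i ↦ Set.Icc (-s i) (s i)) ∩
      (fun y : ι → ℝ ↦ b + ∑ i, ⟪a, e i⟫ * y i) ⁻¹' S) :=
    (MeasurableSet.univ_pi fun _ ↦ measurableSet_Icc).inter (hS.preimage (by fun_prop))
  refine Eq.trans_le ?_ (ofReal_abs_mul_volume_pi_slab_le s (fun i ↦ ⟪a, e i⟫) j b S)
  rw [← (measurePreserving_inner_sub e y₀).measure_preimage measurableSet_slab.nullMeasurableSet,
    Set.preimage_inter, ← coordBox_eq_preimage_pi]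
  congr 2
  ext y
  simp only [Set.mem_ofPred_eq, Set.mem_inter_iff, Set.mem_preimage,
    ← e.sum_inner_mul_inner a (y - y₀), real_inner_comm (y - y₀)]

end CoordinateBox

section ShearedBox

theorem measurePreserving_shear {α : Type*} [MeasurableSpace α] {μ : Measure α} [SFinite μ]
    {g : α → ℝ} (hg : Measurable g) :
    MeasurePreserving (fun p : α × ℝ ↦ (p.1, p.2 - g p.1)) (μ.prod volume) (μ.prod volume) :=
  (MeasurePreserving.id μ).skew_product (g := fun a c ↦ c - g a)
    (measurable_snd.sub (hg.comp measurable_fst))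
    (.of_forall fun a ↦ (measurePreserving_sub_right volume (g a)).map_eq)

variable {ι V : Type*} [Fintype ι] [NormedAddCommGroup V] [InnerProductSpace ℝ V]
  {e : OrthonormalBasis ι ℝ V} {x₀ : V} {s : ι → ℝ} {g : V → ℝ} {h : ℝ}

/-- The vertical `h`-neighbourhood of the graph of `g` over a coordinate box. -/
def shearedBox (e : OrthonormalBasis ι ℝ V) (x₀ : V) (s : ι → ℝ) (g : V → ℝ) (h : ℝ) :
    Set (V × ℝ) :=
  {p | p.1 ∈ coordBox e x₀ s ∧ |p.2 - g p.1| ≤ h}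

theorem shearedBox_eq_preimage_prod :
    shearedBox e x₀ s g h =
      (fun p : V × ℝ ↦ (p.1, p.2 - g p.1)) ⁻¹' coordBox e x₀ s ×ˢ Set.Icc (-h) h := by
  ext p
  simp only [shearedBox, abs_le, Set.mem_ofPred_eq, Set.mem_preimage, Set.mem_prod, Set.mem_Icc]

variable [FiniteDimensional ℝ V] [MeasurableSpace V] [BorelSpace V]

theorem measurableSet_shearedBox (hg : Measurable g) :
    MeasurableSet (shearedBox e x₀ s g h) := by
  rw [shearedBox_eq_preimage_prod]
  exact (measurePreserving_shear (μ := volume) hg).measurable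
    ((measurableSet_coordBox e x₀ s).prod measurableSet_Icc)

theorem volume_shearedBox (hg : Measurable g) (hs : ∀ i, 0 ≤ s i) :
    volume (shearedBox e x₀ s g h) =
      ENNReal.ofReal (2 ^ (Fintype.card ι + 1) * ((∏ i, s i) * h)) := by
  rw [shearedBox_eq_preimage_prod, Measure.volume_eq_prod,
    (measurePreserving_shear hg).measure_preimage
      ((measurableSet_coordBox e x₀ s).prod measurableSet_Icc).nullMeasurableSet,
    Measure.prod_prod, volume_coordBox, Real.volume_Icc,
    ← ENNReal.ofReal_prod_of_nonneg fun i _ ↦ mul_nonneg zero_le_two (hs i),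
    ← ENNReal.ofReal_mul (Finset.prod_nonneg fun i _ ↦ mul_nonneg zero_le_two (hs i)),
    Finset.prod_mul_distrib, Finset.prod_const, Finset.card_univ]
  ring_nf

end ShearedBox

section Median

open Filter Topology

theorem le_measure_Iic_of_forall_gt {α : Type*} [LinearOrder α] [TopologicalSpace α]
    [OrderTopology α] [DenselyOrdered α] [NoMaxOrder α] [FirstCountableTopology α]
    [MeasurableSpace α] [OpensMeasurableSpace α] {ν : Measure α} [IsFiniteMeasure ν] {m : α}
    {c : ℝ≥0∞} (h : ∀ y > m, c ≤ ν (Set.Iic y)) : c ≤ ν (Set.Iic m) := by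
  obtain ⟨m', hm'⟩ := exists_gt m
  have right_limit := tendsto_measure_biInter_gt (μ := ν) (s := Set.Iic) (a := m)
    (fun _ _ ↦ nullMeasurableSet_Iic) (fun _ _ _ ↦ Set.Iic_subset_Iic.mpr)
    ⟨m', hm', measure_ne_top ν _⟩
  have iInter_eq : ⋂ r > m, Set.Iic r = Set.Iic m := by
    ext x
    simpa only [Set.mem_iInter, Set.mem_Iic] using
      ⟨le_of_forall_gt_imp_ge_of_dense, fun hx r (hr : m < r) ↦ hx.trans hr.le⟩
  rw [iInter_eq] at right_limit
  have := nhdsGT_neBot m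
  exact ge_of_tendsto right_limit (eventually_mem_nhdsWithin.mono h)

theorem exists_median (ν : Measure ℝ) [IsFiniteMeasure ν] :
    ∃ m, ν Set.univ ≤ 2 * ν (Set.Iic m) ∧ ν Set.univ ≤ 2 * ν (Set.Ici m) := by
  rcases eq_or_ne (ν Set.univ) 0 with h0 | h0
  · exact ⟨0, h0 ▸ zero_le, h0 ▸ zero_le⟩
  have half_lt : ν Set.univ / 2 < ν Set.univ := ENNReal.half_lt_self h0 (measure_ne_top ν _)
  have le_two_mul_iff (a : ℝ≥0∞) : ν Set.univ ≤ 2 * a ↔ ν Set.univ / 2 ≤ a := by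
    rw [ENNReal.div_le_iff_le_mul (by simp) (by simp), mul_comm]
  simp only [le_two_mul_iff]
  set T := {x | ν Set.univ / 2 ≤ ν (Set.Iic x)}
  have nonempty_T : T.Nonempty :=
    (((tendsto_measure_Iic_atTop ν).eventually_const_lt half_lt).mono fun _ ↦ le_of_lt).exists
  have bddBelow_T : BddBelow T := by
    obtain ⟨x, hx⟩ := ((tendsto_measure_Ici_atBot ν).eventually_const_lt half_lt).exists
    refine ⟨x, fun y hy ↦ le_of_not_gt fun hyx ↦ ?_⟩
    have := ENNReal.add_lt_add_of_le_of_lt (by finiteness) (show _ / 2 ≤ _ from hy) hx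
    rw [ENNReal.add_halves, ← measure_union (Set.Iic_disjoint_Ici.mpr hyx.not_ge)
      measurableSet_Ici] at this
    exact this.not_ge (measure_mono (Set.subset_univ _))
  have : IsFiniteMeasure (α := ℝᵒᵈ) ν := ‹IsFiniteMeasure ν›
  refine ⟨sInf T, le_measure_Iic_of_forall_gt fun y hy ↦ ?_,
    le_measure_Iic_of_forall_gt (α := ℝᵒᵈ) (m := OrderDual.toDual (sInf T)) fun y hy ↦ ?_⟩
  · obtain ⟨x, hxT, hxy⟩ := (csInf_lt_iff bddBelow_T nonempty_T).mp hy
    exact hxT.trans (measure_mono (Set.Iic_subset_Iic.mpr hxy.le))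
  · replace hy : ν (Set.Iic (OrderDual.ofDual y)) < ν Set.univ / 2 :=
      not_le.mp fun h ↦ (csInf_le bddBelow_T h).not_gt hy
    by_contra! h
    have := ENNReal.add_lt_add hy h
    rw [ENNReal.add_halves] at this
    refine this.not_ge ((measure_mono fun x _ ↦ ?_).trans (measure_union_le _ _))
    exact le_total x (OrderDual.ofDual y)

end Median

section Refinement

variable {α β : Type*} [MeasurableSpace α] [MeasurableSpace β]

/-- The points of `G ⊆ α × β` whose vertical fibre in `G` has `ν`-measure at least `t`. -/
def fiberRefine (ν : Measure β) (G : Set (α × β)) (t : ℝ≥0∞) : Set (α × β) :=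
  {z ∈ G | t ≤ ν (Prod.mk z.1 ⁻¹' G)}

theorem measurableSet_fiberRefine {ν : Measure β} [SFinite ν] {G : Set (α × β)}
    (hG : MeasurableSet G) (t : ℝ≥0∞) : MeasurableSet (fiberRefine ν G t) :=
  hG.inter (measurableSet_le measurable_const
    ((measurable_measure_prodMk_left hG).comp measurable_fst))

theorem measure_prod_le_fiberRefine_add {μ : Measure α} {ν : Measure β} [SFinite μ] [SFinite ν]
    {G : Set (α × β)} (hG : MeasurableSet G) {E : Set α} (hGE : ∀ z ∈ G, z.1 ∈ E) (t : ℝ≥0∞) :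
    μ.prod ν G ≤ μ.prod ν (fiberRefine ν G t) + t * μ E := by
  have fiber_le (p : α) :
      ν (Prod.mk p ⁻¹' (G \ fiberRefine ν G t)) ≤ E.indicator (fun _ ↦ t) p := by
    rcases (Prod.mk p ⁻¹' (G \ fiberRefine ν G t)).eq_empty_or_nonempty with h | ⟨y, hyG, hy⟩
    · simp only [h, measure_empty, zero_le]
    · rw [Set.indicator_of_mem (hGE _ hyG)]
      exact (measure_mono (Set.preimage_mono Set.sdiff_subset)).trans
        (not_le.mp fun h ↦ hy ⟨hyG, h⟩).le
  have hR := measurableSet_fiberRefine (ν := ν) hG t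
  calc μ.prod ν G ≤ μ.prod ν (fiberRefine ν G t) + μ.prod ν (G \ fiberRefine ν G t) := by
        rw [← measure_inter_add_sdiff G hR]
        gcongr
        exact Set.inter_subset_right
    _ ≤ μ.prod ν (fiberRefine ν G t) + t * μ E := by
        rw [Measure.prod_apply (hG.diff hR)]
        gcongr
        exact (lintegral_mono fiber_le).trans (lintegral_indicator_const_le _ _)

end Refinement

section Pigeonhole

variable {Ω : Type*} [MeasurableSpace Ω] {μ : Measure Ω} {A : Set Ω}

theorem exists_measure_le_card_mul_measure_fiber {κ : Type*} {φ : Ω → κ} {K : Finset κ}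
    (hK : K.Nonempty) (hφ : ∀ z ∈ A, φ z ∈ K) :
    ∃ k ∈ K, μ A ≤ K.card * μ (A ∩ φ ⁻¹' {k}) := by
  refine ENNReal.exists_le_of_sum_le hK ?_
  have A_subset : A ⊆ ⋃ k ∈ K, A ∩ φ ⁻¹' {k} := fun z hz ↦
    Set.mem_biUnion (hφ z hz) ⟨hz, rfl⟩
  calc ∑ _k ∈ K, μ A = K.card * μ A := by rw [Finset.sum_const, nsmul_eq_mul]
    _ ≤ K.card * ∑ k ∈ K, μ (A ∩ φ ⁻¹' {k}) := by
        gcongr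
        exact (measure_mono A_subset).trans (measure_biUnion_finset_le _ _)
    _ = ∑ k ∈ K, K.card * μ (A ∩ φ ⁻¹' {k}) := Finset.mul_sum _ _ _

theorem card_Icc_neg_ceil_le {x : ℝ} (hx : 1 ≤ x) :
    ((Finset.Icc (-⌈x⌉) ⌈x⌉).card : ℝ) ≤ 5 * x := by
  have ceil_nonneg : (0 : ℝ) ≤ ⌈x⌉ := (zero_le_one.trans hx).trans (Int.le_ceil x)
  have card_eq : ((Finset.Icc (-⌈x⌉) ⌈x⌉).card : ℝ) = 2 * ⌈x⌉ + 1 := by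
    have : 0 ≤ ⌈x⌉ := Int.cast_nonneg_iff.mp ceil_nonneg
    rw [← Int.cast_natCast, Int.card_Icc_of_le _ _ (by omega)]
    push_cast
    ring
  linarith [Int.ceil_lt_add_one x]

theorem exists_measure_le_mul_measure_forall_abs_sub_lt {ι : Type*} [Fintype ι] (hA : μ A ≠ 0)
    {f : ι → Ω → ℝ} {M σ : ℝ} (hσ : 0 < σ) (hσM : σ ≤ M) (hf : ∀ i, ∀ z ∈ A, |f i z| ≤ M) :
    ∃ z₀ ∈ A, μ A ≤ ENNReal.ofReal ((5 * M / σ) ^ Fintype.card ι) *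
      μ (A ∩ {z | ∀ i, |f i z - f i z₀| < σ}) := by
  classical
  have one_le : 1 ≤ M / σ := (one_le_div hσ).mpr hσM
  set K := Fintype.piFinset fun _ : ι ↦ Finset.Icc (-⌈M / σ⌉) ⌈M / σ⌉
  set φ : Ω → ι → ℤ := fun z i ↦ ⌊f i z / σ⌋
  have hφ : ∀ z ∈ A, φ z ∈ K := fun z hz ↦ Fintype.mem_piFinset.mpr fun i ↦ by
    have ⟨lower, upper⟩ := abs_le.mp (hf i z hz)
    rw [Finset.mem_Icc, Int.le_floor, Int.cast_neg, neg_le]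
    refine ⟨?_, (Int.floor_mono (by gcongr)).trans (Int.floor_le_ceil _)⟩
    rw [← neg_div]
    exact (div_le_div_of_nonneg_right (neg_le.mp lower) hσ.le).trans (Int.le_ceil _)
  obtain ⟨z, hz⟩ := nonempty_of_measure_ne_zero hA
  obtain ⟨k, -, hk⟩ := exists_measure_le_card_mul_measure_fiber (μ := μ) ⟨φ z, hφ z hz⟩ hφ
  obtain ⟨z₀, hz₀, rfl⟩ : (A ∩ φ ⁻¹' {k}).Nonempty :=
    nonempty_of_measure_ne_zero fun h ↦ hA (le_zero_iff.mp (by rwa [h, mul_zero] at hk))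
  refine ⟨z₀, hz₀, hk.trans (mul_le_mul' ?_ (measure_mono ?_))⟩
  · rw [← ENNReal.ofReal_natCast, Fintype.card_piFinset, Finset.prod_const,
      Finset.card_univ, Nat.cast_pow, mul_div_assoc]
    gcongr
    exact card_Icc_neg_ceil_le one_le
  · refine Set.inter_subset_inter_right _ fun w hw i ↦ ?_
    have := Int.abs_sub_lt_one_of_floor_eq_floor (congrFun hw i)
    rwa [← sub_div, abs_div, abs_of_pos hσ, div_lt_one hσ] at this

end Pigeonhole

section AbsDet

variable {ι V : Type*} [Fintype ι] [DecidableEq ι] [NormedAddCommGroup V] [InnerProductSpace ℝ V]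

/-- The volume of the parallelepiped spanned by `Y`, as the absolute value of its determinant in
the orthonormal basis `b`; it does not depend on `b`. -/
def absDet (b : OrthonormalBasis ι ℝ V) (Y : ι → V) : ℝ≥0∞ :=
  ENNReal.ofReal |b.toBasis.det Y|

theorem absDet_orthonormalBasis (b e : OrthonormalBasis ι ℝ V) : absDet b e = 1 := by
  rcases b.det_to_matrix_orthonormalBasis_real e with h | h <;>
    simp only [absDet, h, abs_neg, abs_one, ENNReal.ofReal_one]

theorem absDet_update_add_smul (b : OrthonormalBasis ι ℝ V) {w : ι → V} {i : ι} {t : Set ι}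
    (hi : i ∉ t) {k : V} (hk : k ∈ Submodule.span ℝ (w '' t)) {c : ℝ} (hc : 0 ≤ c) (v : V) :
    absDet b (Function.update w i (k + c • v)) =
      ENNReal.ofReal c * absDet b (Function.update w i v) := by
  set D := b.toBasis.det
  have span_le_ker : Submodule.span ℝ (w '' t) ≤
      LinearMap.ker (D.toMultilinearMap.toLinearMap w i) := by
    rw [Submodule.span_le]
    rintro _ ⟨j, hj, rfl⟩
    exact D.map_update_self w (ne_of_mem_of_not_mem hj hi).symm
  have det_k : D (Function.update w i k) = 0 := span_le_ker hk
  rw [absDet, absDet, D.map_update_add, det_k, zero_add, D.map_update_smul, smul_eq_mul, abs_mul,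
    abs_of_nonneg hc, ENNReal.ofReal_mul hc]

theorem measurable_absDet [FiniteDimensional ℝ V] [MeasurableSpace V] [BorelSpace V]
    (b : OrthonormalBasis ι ℝ V) : Measurable (absDet b) := by
  have := FiniteDimensional.proper_real V
  have continuous_det : Continuous fun Y : ι → V ↦ b.toBasis.det Y := by
    simp_rw [Module.Basis.det_apply]
    refine Continuous.matrix_det (continuous_matrix fun i j ↦ ?_)
    simp only [Module.Basis.toMatrix_apply, OrthonormalBasis.coe_toBasis_repr_apply]
    fun_prop
  exact ENNReal.measurable_ofReal.comp continuous_det.abs.measurable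

theorem lmarginal_absDet_update_add_smul (b : OrthonormalBasis ι ℝ V) [MeasurableSpace V]
    (ν : ι → Measure V) (e : ι → V) {s : Finset ι} {i : ι} (hi : i ∉ s) {k : V}
    (hk : k ∈ Submodule.span ℝ (e '' ((insert i s : Finset ι) : Set ι)ᶜ)) {c : ℝ} (hc : 0 ≤ c)
    (v : V) :
    lmarginal ν s (absDet b) (Function.update e i (k + c • v)) =
      ENNReal.ofReal c * lmarginal ν s (absDet b) (Function.update e i v) := by
  rw [lmarginal, lmarginal, ← lintegral_const_mul' _ _ ENNReal.ofReal_ne_top]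
  refine lintegral_congr fun Z ↦ ?_
  set w := Function.updateFinset e s Z
  have update_comm (v : V) : Function.updateFinset (Function.update e i v) s Z =
      Function.update w i v := by
    funext j
    rcases eq_or_ne j i with rfl | hji <;> simp [w, Function.updateFinset, *]
  have image_eq :
      w '' ((insert i s : Finset ι) : Set ι)ᶜ = e '' ((insert i s : Finset ι) : Set ι)ᶜ :=
    Set.image_congr fun j hj ↦ by simp_all [w, Function.updateFinset]
  rw [update_comm, update_comm]
  exact absDet_update_add_smul b (t := ((insert i s : Finset ι) : Set ι)ᶜ) (by simp)
    (image_eq ▸ hk) hc v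

end AbsDet

section Frame

variable {ι V : Type*} [Fintype ι] [NormedAddCommGroup V] [InnerProductSpace ℝ V]

theorem span_image_ne_top (e : OrthonormalBasis ι ℝ V) {t : Set ι} {i : ι} (hi : i ∉ t) :
    Submodule.span ℝ (e '' t) ≠ ⊤ := fun h ↦ by
  have := e.toBasis.linearIndependent.notMem_span_image hi
  rw [e.coe_toBasis, h] at this
  exact this Submodule.mem_top

theorem exists_orthonormalBasis_update (e : OrthonormalBasis ι ℝ V) {t : Set ι} {i : ι}
    (hi : i ∉ t) {u : V} (hu : ‖u‖ = 1) (hut : u ∈ (Submodule.span ℝ (e '' t))ᗮ) :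
    ∃ e' : OrthonormalBasis ι ℝ V, e' i = u ∧ ∀ j ∈ t, e' j = e j := by
  classical
  have inner_u {j : ι} (hj : j ∈ t) : ⟪e j, u⟫ = 0 :=
    hut _ (Submodule.subset_span (Set.mem_image_of_mem e hj))
  have ne_i {j : ι} (hj : j ∈ t) : j ≠ i := ne_of_mem_of_not_mem hj hi
  have orthonormal_update : Orthonormal ℝ ((insert i t).domRestrict (Function.update e i u)) := by
    rw [orthonormal_iff_ite]
    rintro ⟨j, hj⟩ ⟨k, hk⟩
    simp only [Set.domRestrict_apply, Subtype.mk.injEq]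
    rw [Set.mem_insert_iff] at hj hk
    rcases hj with rfl | hj <;> rcases hk with rfl | hk
    · simp [hu]
    · simp [ne_i hk, (ne_i hk).symm, real_inner_comm _ u, inner_u hk]
    · simp [ne_i hj, inner_u hj]
    · simp [ne_i hj, ne_i hk, orthonormal_iff_ite.mp e.orthonormal]
  have := e.toBasis.finiteDimensional_of_finite
  obtain ⟨e', he'⟩ := orthonormal_update.exists_orthonormalBasis_extension_of_card_eq
    (Module.finrank_eq_card_basis e.toBasis)
  refine ⟨e', ?_, fun j hj ↦ ?_⟩
  · rw [he' i (Set.mem_insert i t), Function.update_self]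
  · rw [he' j (Set.mem_insert_of_mem i hj), Function.update_of_ne (ne_i hj)]

variable [FiniteDimensional ℝ V] [MeasurableSpace V] [BorelSpace V]

theorem exists_median_norm_starProjection {K : Submodule ℝ V} (hK : K ≠ ⊤) {F : Set V}
    (hF0 : volume F ≠ 0) (hFtop : volume F ≠ ⊤) :
    ∃ r > 0, volume F ≤ 2 * volume {y ∈ F | ‖Kᗮ.starProjection y‖ ≤ r} ∧
      volume F ≤ 2 * volume {y ∈ F | r ≤ ‖Kᗮ.starProjection y‖} := by
  have hN : Measurable fun y ↦ ‖Kᗮ.starProjection y‖ := by fun_prop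
  have := isFiniteMeasure_restrict.mpr hFtop
  set ν := (volume.restrict F).map fun y ↦ ‖Kᗮ.starProjection y‖
  have ν_apply {S : Set ℝ} (hS : MeasurableSet S) :
      ν S = volume {y ∈ F | ‖Kᗮ.starProjection y‖ ∈ S} := by
    rw [Measure.map_apply hN hS, Measure.restrict_apply (hN hS), Set.inter_comm]
    rfl
  have ν_univ : ν Set.univ = volume F := by simp [ν_apply]
  obtain ⟨r, hr_Iic, hr_Ici⟩ := exists_median ν
  rw [ν_univ, ν_apply measurableSet_Iic] at hr_Iic
  rw [ν_univ, ν_apply measurableSet_Ici] at hr_Ici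
  refine ⟨r, not_le.mp fun hr ↦ hF0 (le_zero_iff.mp (hr_Iic.trans_eq ?_)), hr_Iic, hr_Ici⟩
  rw [measure_mono_null _ (Measure.addHaar_submodule volume K hK), mul_zero]
  rintro y ⟨-, hy⟩
  have : Kᗮ.starProjection y = 0 := norm_le_zero_iff.mp (hy.trans hr)
  rwa [Submodule.starProjection_apply_eq_zero_iff, Submodule.orthogonal_orthogonal] at this

theorem exists_unit_mem_orthogonal_mul_measure_le {K : Submodule ℝ V} (hK : K ≠ ⊤) {F : Set V}
    (hF0 : volume F ≠ 0) (hFtop : volume F ≠ ⊤) {J : V → ℝ≥0∞}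
    (hJ : Measurable J)
    (hJK : ∀ k ∈ K, ∀ c : ℝ, 0 ≤ c → ∀ v, J (k + c • v) = ENNReal.ofReal c * J v) :
    ∃ u ∈ Kᗮ, ‖u‖ = 1 ∧ ∃ r > 0, volume F ≤ 2 * volume {y ∈ F | |⟪y, u⟫| ≤ r} ∧
      ENNReal.ofReal r * J u * volume F ≤ 2 * ∫⁻ y in F, J y := by
  set P := Kᗮ.starProjection
  obtain ⟨r, hr, low, high⟩ := exists_median_norm_starProjection hK hF0 hFtop
  have high0 : volume {y ∈ F | r ≤ ‖P y‖} ≠ 0 := fun h ↦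
    hF0 (le_zero_iff.mp (by rwa [h, mul_zero] at high))
  have hightop : volume {y ∈ F | r ≤ ‖P y‖} ≠ ⊤ :=
    measure_ne_top_of_subset (Set.sep_subset _ _) hFtop
  obtain ⟨y, ⟨-, hry⟩, hy⟩ := exists_le_setLAverage high0 hightop hJ.aemeasurable.restrict
  have norm_pos : 0 < ‖P y‖ := hr.trans_le hry
  set u := ‖P y‖⁻¹ • P y
  have hu : ‖u‖ = 1 := by simp [u, norm_smul, norm_pos.ne']
  have hu_mem : u ∈ Kᗮ := Submodule.smul_mem _ _ (Submodule.starProjection_apply_mem _ y)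
  refine ⟨u, hu_mem, hu, r, hr, low.trans ?_, ?_⟩
  · gcongr 2 * volume {w | w ∈ F ∧ ?_} with w
    intro hw
    calc |⟪w, u⟫| = |⟪P w, u⟫| := by
          rw [Submodule.inner_starProjection_left_eq_right,
            Submodule.starProjection_eq_self_iff.mpr hu_mem]
      _ ≤ ‖P w‖ * ‖u‖ := abs_real_inner_le_norm _ _
      _ ≤ r := by rwa [hu, mul_one]
  · have J_y : J y = ENNReal.ofReal ‖P y‖ * J u := by
      rw [← hJK (K.starProjection y) (Submodule.starProjection_apply_mem _ y) _ (norm_nonneg _),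
        smul_inv_smul₀ norm_pos.ne', Submodule.starProjection_add_starProjection_orthogonal]
    calc ENNReal.ofReal r * J u * volume F
        ≤ ENNReal.ofReal ‖P y‖ * J u * (2 * volume {y ∈ F | r ≤ ‖P y‖}) := by gcongr
      _ = 2 * (J y * volume {y ∈ F | r ≤ ‖P y‖}) := by rw [J_y]; ring
      _ ≤ 2 * ∫⁻ y in {y ∈ F | r ≤ ‖P y‖}, J y := by
        gcongr
        rwa [setLAverage_eq, ENNReal.le_div_iff_mul_le (.inl high0) (.inl hightop)] at hy
      _ ≤ 2 * ∫⁻ y in F, J y := by gcongr; exact Set.sep_subset _ _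

end Frame

section FrameInduction

variable {ι V : Type*} [Fintype ι] [DecidableEq ι] [NormedAddCommGroup V]
  [InnerProductSpace ℝ V] [FiniteDimensional ℝ V] [MeasurableSpace V] [BorelSpace V]

theorem mul_pow_succ_le_two_pow_mul {ρ p a m J I : ℝ≥0∞} {k : ℕ} (ha : a ≤ 2 * m)
    (hI : ρ * J * a ≤ 2 * I) (hJ : p * m ^ k ≤ 2 ^ k ^ 2 * J) :
    ρ * p * a ^ (k + 1) ≤ 2 ^ (k + 1) ^ 2 * I :=
  calc ρ * p * a ^ (k + 1) = ρ * p * a ^ k * a := by ring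
    _ ≤ ρ * p * (2 * m) ^ k * a := by gcongr
    _ = 2 ^ k * (ρ * (p * m ^ k) * a) := by ring
    _ ≤ 2 ^ k * (ρ * (2 ^ k ^ 2 * J) * a) := by gcongr
    _ = 2 ^ (k ^ 2 + k) * (ρ * J * a) := by ring
    _ ≤ 2 ^ (k ^ 2 + k) * (2 * I) := by gcongr
    _ = 2 ^ (k ^ 2 + k + 1) * I := by ring
    _ ≤ 2 ^ (k + 1) ^ 2 * I := by gcongr <;> [exact one_le_two; nlinarith]

theorem exists_orthonormalBasis_prod_mul_measure_pow_le (b : OrthonormalBasis ι ℝ V) {F : Set V}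
    (hFtop : volume F ≠ ⊤) (s : Finset ι) (F₁ : Set V) (hF₁ : MeasurableSet F₁) (hF₁F : F₁ ⊆ F)
    (hF₁0 : volume F₁ ≠ 0) (e₀ : OrthonormalBasis ι ℝ V) :
    ∃ (e : OrthonormalBasis ι ℝ V) (r : ι → ℝ), (∀ i ∉ s, e i = e₀ i) ∧ (∀ i, 0 < r i) ∧
      volume F₁ ≤ 2 ^ s.card * volume {y ∈ F₁ | ∀ i ∈ s, |⟪y, e i⟫| ≤ r i} ∧
      (∏ i ∈ s, ENNReal.ofReal (r i)) * volume F₁ ^ s.card ≤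
        2 ^ s.card ^ 2 * lmarginal (fun _ ↦ volume.restrict F) s (absDet b) e₀ := by
  induction s using Finset.induction_on generalizing F₁ e₀ with
  | empty => exact ⟨e₀, 1, by simp, by simp, by simp, by simp [absDet_orthonormalBasis]⟩
  | insert i s hi ih =>
    set J : V → ℝ≥0∞ := fun y ↦
      lmarginal (fun _ ↦ volume.restrict F) s (absDet b) (Function.update e₀ i y)
    have hi' : i ∉ ((insert i s : Finset ι) : Set ι)ᶜ := by simp
    obtain ⟨u, hu_mem, hu, ρ, hρ, low, ρ_mul_J_le⟩ := exists_unit_mem_orthogonal_mul_measure_le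
      (span_image_ne_top e₀ hi') hF₁0 (measure_ne_top_of_subset hF₁F hFtop) (J := J)
      (((measurable_absDet b).lmarginal _).comp (measurable_update _))
      fun k hk c hc v ↦ lmarginal_absDet_update_add_smul b _ e₀ hi hk hc v
    obtain ⟨e₁, he₁i, he₁⟩ := exists_orthonormalBasis_update e₀ hi' hu hu_mem
    set F₂ := {y ∈ F₁ | |⟪y, u⟫| ≤ ρ}
    have measurableSet_F₂ : MeasurableSet F₂ :=
      hF₁.inter (measurableSet_le (f := fun y ↦ |⟪y, u⟫|) (by fun_prop) measurable_const)
    obtain ⟨e, r, he, hr, hF₂, prod_le⟩ := ih F₂ measurableSet_F₂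
      ((Set.sep_subset _ _).trans hF₁F)
      (fun h ↦ hF₁0 (le_zero_iff.mp (by rwa [h, mul_zero] at low))) e₁
    have J_u : lmarginal (fun _ ↦ volume.restrict F) s (absDet b) e₁ = J u :=
      lmarginal_congr _ _ fun j hj ↦ by
        rcases eq_or_ne j i with rfl | hji
        · rw [he₁i, Function.update_self]
        · rw [he₁ j (by simp [hj, hji]), Function.update_of_ne hji]
    have ne_i {j : ι} (hj : j ∈ s) : j ≠ i := ne_of_mem_of_not_mem hj hi
    refine ⟨e, Function.update r i ρ, fun j hj ↦ ?_, fun j ↦ ?_, ?_, ?_⟩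
    · rw [he j fun h ↦ hj (Finset.mem_insert_of_mem h), he₁ j (by simpa using hj)]
    · rcases eq_or_ne j i with rfl | hji
      · rwa [Function.update_self]
      · rw [Function.update_of_ne hji]
        exact hr j
    · rw [Finset.card_insert_of_notMem hi, pow_succ', mul_assoc]
      refine low.trans (mul_le_mul' le_rfl (hF₂.trans (mul_le_mul' le_rfl (measure_mono ?_))))
      rintro y ⟨⟨hy, hyu⟩, hys⟩
      refine ⟨hy, (Finset.forall_mem_insert ..).mpr ⟨?_, fun j hj ↦ ?_⟩⟩
      · rwa [he i hi, he₁i, Function.update_self]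
      · rw [Function.update_of_ne (ne_i hj)]
        exact hys j hj
    · rw [lmarginal_insert _ (measurable_absDet b) hi, Finset.card_insert_of_notMem hi,
        Finset.prod_insert hi, Function.update_self,
        Finset.prod_congr rfl fun j hj ↦ by rw [Function.update_of_ne (ne_i hj)]]
      refine mul_pow_succ_le_two_pow_mul (m := volume F₂) (J := J u) low (ρ_mul_J_le.trans ?_)
        (J_u ▸ prod_le)
      gcongr

theorem exists_orthonormalBasis_measure_inter_coordBox (b : OrthonormalBasis ι ℝ V) {F : Set V}
    (hF : MeasurableSet F) (hF0 : volume F ≠ 0) (hFtop : volume F ≠ ⊤) :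
    ∃ (e : OrthonormalBasis ι ℝ V) (r : ι → ℝ), (∀ i, 0 < r i) ∧
      volume F ≤ 2 ^ Fintype.card ι * volume (F ∩ coordBox e 0 r) ∧
      (∏ i, ENNReal.ofReal (r i)) * volume F ^ Fintype.card ι ≤
        2 ^ Fintype.card ι ^ 2 * ∫⁻ Y in Set.univ.pi fun _ ↦ F, absDet b Y := by
  obtain ⟨e, r, -, hr, vol_le, prod_le⟩ := exists_orthonormalBasis_prod_mul_measure_pow_le b hFtop
    Finset.univ F hF subset_rfl hF0 b
  refine ⟨e, r, hr, by simpa [coordBox, Set.inter_def] using vol_le, ?_⟩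
  rwa [lmarginal_univ, ← Measure.restrict_pi_pi] at prod_le

end FrameInduction

theorem lintegral_volume_setOf_forall_add_mem {ι V : Type*} [Fintype ι] [NormedAddCommGroup V]
    [InnerProductSpace ℝ V] [FiniteDimensional ℝ V] [MeasurableSpace V] [BorelSpace V]
    {Es : Set (V × ℝ)} (hEs : MeasurableSet Es) (q : V × ℝ) :
    ∫⁻ Y : ι → V, volume {w : ι → ℝ | ∀ i, q + (Y i, w i) ∈ Es} =
      volume Es ^ Fintype.card ι := by
  set P : Set (ι → V × ℝ) := Set.univ.pi fun _ ↦ (q + ·) ⁻¹' Es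
  have measurableSet_P : MeasurableSet P :=
    MeasurableSet.univ_pi fun _ ↦ measurable_const_add q hEs
  have rearrange := (volume_measurePreserving_arrowProdEquivProdArrow V ℝ ι).symm
  have volume_P : volume P = volume Es ^ Fintype.card ι := by
    have : (volume : Measure (V × ℝ)).IsAddLeftInvariant := by
      rw [Measure.volume_eq_prod]
      infer_instance
    rw [volume_pi_pi, Finset.prod_congr rfl fun _ _ ↦ measure_preimage_add volume q Es,
      Finset.prod_const, Finset.card_univ]
  rw [← volume_P, ← rearrange.measure_preimage_equiv, Measure.volume_eq_prod,
    Measure.prod_apply (MeasurableEquiv.measurable _ measurableSet_P)]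
  congr! with Y
  ext w
  simp only [P, Set.mem_ofPred_eq, Set.mem_preimage, Set.mem_univ_pi]
  rfl

section DetMeasure

variable {ι V : Type*} [Fintype ι] [DecidableEq ι] [NormedAddCommGroup V]
  [InnerProductSpace ℝ V]

theorem absDet_smul (b : OrthonormalBasis ι ℝ V) (c : ℝ) (Y : ι → V) :
    absDet b (c • Y) = ENNReal.ofReal (|c| ^ Fintype.card ι) * absDet b Y := by
  have : c • Y = fun i ↦ c • Y i := rfl
  rw [absDet, absDet, this, AlternatingMap.map_smul_univ, ← ENNReal.ofReal_mul (by positivity),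
    smul_eq_mul, abs_mul, Finset.prod_const, Finset.card_univ, abs_pow]

variable [FiniteDimensional ℝ V] [MeasurableSpace V] [BorelSpace V]

theorem absDet_mul_volume_preimage_inner_le (b : OrthonormalBasis ι ℝ V) (Y : ι → V)
    {S : Set (ι → ℝ)} (hS : MeasurableSet S) :
    absDet b Y * volume ((fun x i ↦ ⟪x, Y i⟫) ⁻¹' S) ≤ volume S := by
  set L := Matrix.toLin' (b.toBasis.toMatrix Y).transpose
  have inner_eq : (fun (x : V) i ↦ ⟪x, Y i⟫) = L ∘ fun x i ↦ ⟪x - 0, b i⟫ := by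
    funext x i
    simp only [L, Function.comp_apply, Matrix.toLin'_apply, Matrix.mulVec, dotProduct,
      Matrix.transpose_apply, Module.Basis.toMatrix_apply,
      OrthonormalBasis.coe_toBasis_repr_apply, OrthonormalBasis.repr_apply_apply, sub_zero,
      ← b.sum_inner_mul_inner x (Y i)]
    exact Finset.sum_congr rfl fun j _ ↦ mul_comm _ _
  have absDet_eq : absDet b Y = ENNReal.ofReal |LinearMap.det L| := by
    rw [absDet, LinearMap.det_toLin', Matrix.det_transpose, Module.Basis.det_apply]
  have measurableSet_preimage : MeasurableSet (L ⁻¹' S) :=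
    (LinearMap.continuous_of_finiteDimensional L).measurable hS
  rw [inner_eq, Set.preimage_comp,
    (measurePreserving_inner_sub b 0).measure_preimage
      measurableSet_preimage.nullMeasurableSet, absDet_eq, ← Measure.addHaar_image_linearMap]
  exact measure_mono (Set.image_preimage_subset _ _)

/-- The measure `|det Y| dY` on `ι`-tuples of vectors of `V`. -/
def detMeasure (b : OrthonormalBasis ι ℝ V) : Measure (ι → V) :=
  volume.withDensity (absDet b)

instance (b : OrthonormalBasis ι ℝ V) : SFinite (detMeasure b) :=
  inferInstanceAs (SFinite (volume.withDensity _))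

end DetMeasure

section IncidenceSwap

variable {V : Type*} [NormedAddCommGroup V] [InnerProductSpace ℝ V]

/-- In the sheared coordinates `((x, u), y)`, where `(x, u)` is a point and `(y, v)` the
incident point with `u + v + 2⟪x, y⟫ = 0`, the involution exchanging the two points. -/
def incidenceSwap (z : (V × ℝ) × V) : (V × ℝ) × V :=
  ((z.2, -(z.1.2 + 2 * ⟪z.1.1, z.2⟫)), z.1.1)

theorem incidenceSwap_involutive :
    Function.Involutive (incidenceSwap : (V × ℝ) × V → (V × ℝ) × V) := fun z ↦ by
  simp only [incidenceSwap, real_inner_comm, neg_add_rev, neg_neg, neg_add_cancel_comm]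

variable [FiniteDimensional ℝ V] [MeasurableSpace V] [BorelSpace V]

theorem measurePreserving_prod_right_comm {α β γ : Type*} [MeasurableSpace α] [MeasurableSpace β]
    [MeasurableSpace γ] (μ : Measure α) (ν : Measure β) (ξ : Measure γ) [SFinite μ] [SFinite ν]
    [SFinite ξ] :
    MeasurePreserving (fun z : (α × β) × γ ↦ ((z.1.1, z.2), z.1.2)) ((μ.prod ν).prod ξ)
      ((μ.prod ξ).prod ν) :=
  ((measurePreserving_prodAssoc μ ξ ν).symm.comp
    ((MeasurePreserving.id μ).prod Measure.measurePreserving_swap)).comp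
      (measurePreserving_prodAssoc μ ν ξ)

theorem measurePreserving_incidenceSwap :
    MeasurePreserving (incidenceSwap : (V × ℝ) × V → (V × ℝ) × V) volume volume := by
  have swap_reflect : MeasurePreserving
      (fun z : (V × V) × ℝ ↦ (z.1.swap, -(z.2 + 2 * ⟪z.1.1, z.1.2⟫))) volume volume :=
    Measure.measurePreserving_swap.skew_product (g := fun p u ↦ -(u + 2 * ⟪p.1, p.2⟫))
      (by unfold Function.uncurry; fun_prop) (.of_forall fun p ↦ ((Measure.measurePreserving_neg
        volume).comp (measurePreserving_add_right volume (2 * ⟪p.1, p.2⟫))).map_eq)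
  exact ((measurePreserving_prod_right_comm volume volume volume).comp swap_reflect).comp
    (measurePreserving_prod_right_comm volume volume volume)

theorem exists_incidenceSwap_refinement {G : Set ((V × ℝ) × V)} (hG : MeasurableSet G)
    {Es : Set (V × ℝ)} (hGEs : ∀ z ∈ G, (incidenceSwap z).1 ∈ Es) (t : ℝ≥0∞) :
    ∃ G' ⊆ G, MeasurableSet G' ∧ volume G ≤ volume G' + t * volume Es ∧
      ∀ z ∈ G', t ≤ volume {x | incidenceSwap ((incidenceSwap z).1, x) ∈ G} := by
  set D := incidenceSwap ⁻¹' G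
  have measurableSet_D : MeasurableSet D := measurePreserving_incidenceSwap.measurable hG
  have hR := measurableSet_fiberRefine (ν := volume) measurableSet_D t
  refine ⟨incidenceSwap ⁻¹' fiberRefine volume D t, fun z hz ↦ incidenceSwap_involutive z ▸ hz.1,
    measurePreserving_incidenceSwap.measurable hR, ?_, fun z hz ↦ hz.2⟩
  rw [measurePreserving_incidenceSwap.measure_preimage hR.nullMeasurableSet,
    ← measurePreserving_incidenceSwap.measure_preimage hG.nullMeasurableSet]
  exact measure_prod_le_fiberRefine_add measurableSet_D
    (fun z hz ↦ incidenceSwap_involutive z ▸ hGEs _ hz) t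

end IncidenceSwap

theorem measurableSet_setOf_forall_mem {ι α β : Type*} [Countable ι] [MeasurableSpace α]
    [MeasurableSpace β] {f : ι → α → β} (hf : ∀ i, Measurable (f i)) {S : Set β}
    (hS : MeasurableSet S) : MeasurableSet {a | ∀ i, f i a ∈ S} := by
  rw [Set.ofPred_forall]
  exact MeasurableSet.iInter fun i ↦ hf i hS

section DeterminantInequality

variable {ι V : Type*} [Fintype ι] [DecidableEq ι] [NormedAddCommGroup V]
  [InnerProductSpace ℝ V] [FiniteDimensional ℝ V] [MeasurableSpace V] [BorelSpace V]

theorem lintegral_detMeasure_setOf_forall_add_mem_le (b : OrthonormalBasis ι ℝ V)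
    {Es : Set (V × ℝ)} (hEs : MeasurableSet Es) (q : V × ℝ) :
    ∫⁻ x, detMeasure b {Y | ∀ i, q + (Y i, -2 * ⟪x, Y i⟫) ∈ Es} ≤
      volume Es ^ Fintype.card ι := by
  set T : Set (V × (ι → V)) := {p | ∀ i, q + (p.2 i, -2 * ⟪p.1, p.2 i⟫) ∈ Es}
  have measurableSet_T : MeasurableSet T :=
    measurableSet_setOf_forall_mem (fun i ↦ by fun_prop) hEs
  calc ∫⁻ x, detMeasure b (Prod.mk x ⁻¹' T)
      = ∫⁻ Y, volume ((·, Y) ⁻¹' T) ∂detMeasure b := by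
        rw [← Measure.prod_apply measurableSet_T, Measure.prod_apply_symm measurableSet_T]
    _ = ∫⁻ Y, absDet b Y * volume ((·, Y) ⁻¹' T) :=
        lintegral_withDensity_eq_lintegral_mul _ (measurable_absDet b)
          (measurable_measure_prodMk_right measurableSet_T)
    _ ≤ ∫⁻ Y : ι → V, volume {w : ι → ℝ | ∀ i, q + (Y i, w i) ∈ Es} := lintegral_mono fun Y ↦ by
        have measurableSet_S : MeasurableSet {w : ι → ℝ | ∀ i, q + (Y i, w i) ∈ Es} :=
          measurableSet_setOf_forall_mem (fun i ↦ by fun_prop) hEs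
        refine le_trans ?_
          (absDet_mul_volume_preimage_inner_le b ((-2 : ℝ) • Y) measurableSet_S)
        rw [absDet_smul]
        simp only [Pi.smul_apply, inner_smul_right]
        refine mul_le_mul' (le_mul_of_one_le_left zero_le ?_) le_rfl
        exact ENNReal.one_le_ofReal.mpr (one_le_pow₀ (by norm_num))
    _ = volume Es ^ Fintype.card ι := lintegral_volume_setOf_forall_add_mem hEs q

theorem setLIntegral_detMeasure_pi_fiber_le (b : OrthonormalBasis ι ℝ V) {Es : Set (V × ℝ)}
    (hEs : MeasurableSet Es) {G : Set ((V × ℝ) × V)} (hGEs : ∀ z ∈ G, (incidenceSwap z).1 ∈ Es) :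
    ∫⁻ z in G, detMeasure b (Set.univ.pi fun _ ↦ {w | (z.1, z.2 + w) ∈ G}) ≤
      volume Es ^ (Fintype.card ι + 1) := by
  set φ : (V × ℝ) × V → ℝ≥0∞ := fun p ↦
    detMeasure b {Y | ∀ i, p.1 + (Y i, -2 * ⟪p.2, Y i⟫) ∈ Es}
  have measurable_φ : Measurable φ := measurable_measure_prodMk_left
    (s := {p : ((V × ℝ) × V) × (ι → V) | ∀ i, p.1.1 + (p.2 i, -2 * ⟪p.1.2, p.2 i⟫) ∈ Es})
    (measurableSet_setOf_forall_mem (fun i ↦ by fun_prop) hEs)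
  have pi_fiber_subset (z : (V × ℝ) × V) : (Set.univ.pi fun _ : ι ↦ {w | (z.1, z.2 + w) ∈ G}) ⊆
      {Y | ∀ i, (incidenceSwap z).1 + (Y i, -2 * ⟪(incidenceSwap z).2, Y i⟫) ∈ Es} := by
    intro Y hY i
    convert hGEs _ (hY i (Set.mem_univ i)) using 1
    simp only [incidenceSwap, Prod.mk_add_mk, inner_add_right]
    ring_nf
  calc _ ≤ ∫⁻ z in incidenceSwap ⁻¹' Es ×ˢ Set.univ, φ (incidenceSwap z) :=
        (setLIntegral_mono (measurable_φ.comp measurePreserving_incidenceSwap.measurable)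
          fun z _ ↦ measure_mono (pi_fiber_subset z)).trans
            (lintegral_mono_set fun z hz ↦ ⟨hGEs z hz, trivial⟩)
    _ = ∫⁻ q in Es, ∫⁻ x, φ (q, x) := by
        rw [measurePreserving_incidenceSwap.setLIntegral_comp_preimage (hEs.prod .univ)
          measurable_φ, Measure.volume_eq_prod, setLIntegral_prod _ measurable_φ.aemeasurable,
          Measure.restrict_univ]
    _ ≤ ∫⁻ _ in Es, volume Es ^ Fintype.card ι :=
        lintegral_mono fun q ↦ lintegral_detMeasure_setOf_forall_add_mem_le b hEs q
    _ = volume Es ^ (Fintype.card ι + 1) := by rw [setLIntegral_const, pow_succ]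

theorem exists_fiber_mul_detMeasure_pi_le (b : OrthonormalBasis ι ℝ V) {E Es : Set (V × ℝ)}
    (hEs : MeasurableSet Es) {G : Set ((V × ℝ) × V)} (hG : MeasurableSet G) (hGtop : volume G ≠ ⊤)
    (hGE : ∀ z ∈ G, z.1 ∈ E) (hGEs : ∀ z ∈ G, (incidenceSwap z).1 ∈ Es) {m t : ℝ≥0∞} (hm : m ≠ 0)
    (ht : t * volume E ≠ ⊤) (hmt : m + t * volume E ≤ volume G) :
    ∃ z ∈ G, t ≤ volume {w | (z.1, z.2 + w) ∈ G} ∧ volume {w | (z.1, z.2 + w) ∈ G} ≠ ⊤ ∧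
      m * detMeasure b (Set.univ.pi fun _ ↦ {w | (z.1, z.2 + w) ∈ G}) ≤
        volume Es ^ (Fintype.card ι + 1) := by
  set φ : (V × ℝ) × V → ℝ≥0∞ := fun z ↦
    detMeasure b (Set.univ.pi fun _ ↦ {w | (z.1, z.2 + w) ∈ G})
  have measurable_φ : Measurable φ := by
    simp only [φ, Set.pi, Set.mem_univ, forall_const]
    exact measurable_measure_prodMk_left
      (s := {p : ((V × ℝ) × V) × (ι → V) | ∀ i, (p.1.1, p.1.2 + p.2 i) ∈ G})
      (measurableSet_setOf_forall_mem (fun i ↦ by fun_prop) hG)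
  set R := fiberRefine volume G t
  have measurableSet_R : MeasurableSet R := measurableSet_fiberRefine hG t
  have m_le : m ≤ volume R := (ENNReal.add_le_add_iff_right ht).mp
    (hmt.trans (measure_prod_le_fiberRefine_add hG hGE t))
  have volume_R_ne_top : volume R ≠ ⊤ := measure_ne_top_of_subset (Set.sep_subset _ _) hGtop
  have : IsFiniteMeasure (volume.restrict R) := isFiniteMeasure_restrict.mpr volume_R_ne_top
  have ae_fiber_lt_top : ∀ᵐ z : (V × ℝ) × V, volume (Prod.mk z.1 ⁻¹' G) < ⊤ :=
    Measure.quasiMeasurePreserving_fst.ae (Measure.ae_measure_lt_top hG hGtop)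
  obtain ⟨z, hz, φ_le⟩ := exists_notMem_null_le_laverage (μ := volume.restrict R) (f := φ)
    (N := {z | ¬(z ∈ R ∧ volume (Prod.mk z.1 ⁻¹' G) < ⊤)})
    (fun h ↦ hm (le_zero_iff.mp (Measure.restrict_eq_zero.mp h ▸ m_le)))
    measurable_φ.aemeasurable
    (ae_iff.mp ((ae_restrict_mem measurableSet_R).and (ae_restrict_of_ae ae_fiber_lt_top)))
  obtain ⟨⟨hzG, t_le⟩, lt_top⟩ := not_not.mp hz
  have volume_fiber : volume {w | (z.1, z.2 + w) ∈ G} = volume (Prod.mk z.1 ⁻¹' G) :=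
    measure_preimage_add volume z.2 (Prod.mk z.1 ⁻¹' G)
  refine ⟨z, hzG, volume_fiber ▸ t_le, volume_fiber ▸ lt_top.ne, ?_⟩
  calc m * φ z ≤ volume R * (⨍⁻ z in R, φ z ∂volume) := mul_le_mul' m_le φ_le
    _ = ∫⁻ z in R, φ z := measure_mul_setLAverage φ volume_R_ne_top
    _ ≤ ∫⁻ z in G, φ z := lintegral_mono_set (Set.sep_subset _ _)
    _ ≤ volume Es ^ (Fintype.card ι + 1) := setLIntegral_detMeasure_pi_fiber_le b hEs hGEs

end DeterminantInequality

theorem mul_measure_le_measure_prod {α β : Type*} [MeasurableSpace α] [MeasurableSpace β]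
    {μ : Measure α} {ν : Measure β} [SFinite ν] {D : Set (α × β)} (hD : MeasurableSet D)
    {A : Set α} {t : ℝ≥0∞} (h : ∀ x ∈ A, t ≤ ν (Prod.mk x ⁻¹' D)) : t * μ A ≤ μ.prod ν D := by
  rw [Measure.prod_apply hD]
  exact (mul_le_mul_right (measure_mono h) t).trans
    (mul_meas_ge_le_lintegral (measurable_measure_prodMk_left hD) t)

theorem mul_measure_le_measure_prod_symm {α β : Type*} [MeasurableSpace α] [MeasurableSpace β]
    {μ : Measure α} {ν : Measure β} [SFinite μ] [SFinite ν] {D : Set (α × β)}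
    (hD : MeasurableSet D) {B : Set β} {t : ℝ≥0∞} (h : ∀ y ∈ B, t ≤ μ ((·, y) ⁻¹' D)) :
    t * ν B ≤ μ.prod ν D := by
  rw [← Measure.prod_swap, Measure.map_apply measurable_swap hD]
  exact mul_measure_le_measure_prod (measurable_swap hD) h

theorem ofReal_sub_le_of_le_add {x y : ℝ≥0∞} {p q : ℝ} (hq : 0 ≤ q)
    (h : ENNReal.ofReal p ≤ x + y) (hy : y ≤ ENNReal.ofReal q) : ENNReal.ofReal (p - q) ≤ x := by
  rw [ENNReal.ofReal_sub p hq, tsub_le_iff_right]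
  exact h.trans (by gcongr)

/-- An incidence frame consists of a base point `(x₀, u₀)`, a centre `y₀` for the points dual to
it, and an orthonormal basis `e` with side lengths `s` for a box around `y₀`. It carries the
anisotropic scaling in which the set of incidences is localized. -/
structure IncidenceFrame (V : Type*) [NormedAddCommGroup V] [InnerProductSpace ℝ V] (n : ℕ) where
  x₀ : V
  u₀ : ℝ
  y₀ : V
  e : OrthonormalBasis (Fin n) ℝ V
  s : Fin n → ℝ
  s_pos : ∀ i, 0 < s i

namespace IncidenceFrame

variable {V : Type*} [NormedAddCommGroup V] [InnerProductSpace ℝ V] {n : ℕ}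

theorem prod_s_pos (𝔉 : IncidenceFrame V n) : 0 < ∏ i, 𝔉.s i :=
  Finset.prod_pos fun i _ ↦ 𝔉.s_pos i

/-- The point over `x` that is incident to the dual point over `y` of the base point, for a pair
`(x, y)`. -/
def lift (𝔉 : IncidenceFrame V n) (p : V × V) : V × ℝ :=
  (p.1, 𝔉.u₀ - 2 * ⟪p.1 - 𝔉.x₀, p.2⟫)

theorem lift_eq_incidenceSwap (𝔉 : IncidenceFrame V n) (x y : V) :
    (𝔉.lift (x, y), y) = incidenceSwap ((incidenceSwap ((𝔉.x₀, 𝔉.u₀), y)).1, x) := by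
  simp only [lift, incidenceSwap, inner_sub_left, real_inner_comm x y]
  ring_nf

variable [FiniteDimensional ℝ V] [MeasurableSpace V] [BorelSpace V]

theorem measurable_lift (𝔉 : IncidenceFrame V n) : Measurable 𝔉.lift := by
  unfold lift
  fun_prop

/-- The pairs `(x, y)` with `y` in the box of the frame for which the lift has a `G`-fibre of
measure at least `t`. -/
def fan (𝔉 : IncidenceFrame V n) (G : Set ((V × ℝ) × V)) (t : ℝ≥0∞) : Set (V × V) :=
  {p | p.2 ∈ coordBox 𝔉.e 𝔉.y₀ 𝔉.s ∧ t ≤ volume (Prod.mk (𝔉.lift p) ⁻¹' G)}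

theorem measurableSet_fan (𝔉 : IncidenceFrame V n) {G : Set ((V × ℝ) × V)} (hG : MeasurableSet G)
    (t : ℝ≥0∞) : MeasurableSet (𝔉.fan G t) :=
  ((measurableSet_coordBox _ _ _).preimage measurable_snd).inter
    (measurableSet_le measurable_const
      ((measurable_measure_prodMk_left hG).comp 𝔉.measurable_lift))

theorem mul_volume_le_volume_fan (𝔉 : IncidenceFrame V n) {G : Set ((V × ℝ) × V)}
    (hG : MeasurableSet G) {t t' : ℝ≥0∞} {F : Set V} (hF : F ⊆ coordBox 𝔉.e 𝔉.y₀ 𝔉.s)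
    (h : ∀ y ∈ F, t' ≤ volume {x | (𝔉.lift (x, y), y) ∈ fiberRefine volume G t}) :
    t' * volume F ≤ volume (𝔉.fan G t) :=
  mul_measure_le_measure_prod_symm (𝔉.measurableSet_fan hG t) fun y hy ↦
    (h y hy).trans (measure_mono fun _ hx ↦ ⟨hF hy, hx.2⟩)

end IncidenceFrame

section ExistsFrame

variable {V : Type*} [NormedAddCommGroup V] [InnerProductSpace ℝ V] [FiniteDimensional ℝ V]
  [MeasurableSpace V] [BorelSpace V] {E Es : Set (V × ℝ)} {G : Set ((V × ℝ) × V)} {a b τ : ℝ}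

theorem exists_fiberRefine_incidenceSwap_refinement (hG : MeasurableSet G)
    (hGE : ∀ z ∈ G, z.1 ∈ E) (hGEs : ∀ z ∈ G, (incidenceSwap z).1 ∈ Es) (ha : 0 < a) (hb : 0 < b)
    (hτ : 0 < τ) (hEa : volume E ≤ ENNReal.ofReal a) (hEsb : volume Es ≤ ENNReal.ofReal b)
    (hGτ : ENNReal.ofReal τ ≤ volume G) :
    ∃ G' ⊆ G, MeasurableSet G' ∧ ENNReal.ofReal (τ / 2) ≤ volume G' ∧
      ∀ z ∈ G', ENNReal.ofReal (τ / (4 * b)) ≤ volume {x | incidenceSwap ((incidenceSwap z).1, x) ∈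
        fiberRefine volume G (ENNReal.ofReal (τ / (4 * a)))} := by
  have mul_le {c : ℝ} {S : Set (V × ℝ)} (hc : 0 < c) (hS : volume S ≤ ENNReal.ofReal c) :
      ENNReal.ofReal (τ / (4 * c)) * volume S ≤ ENNReal.ofReal (τ / 4) := by
    refine (mul_le_mul_right hS _).trans_eq ?_
    rw [← ENNReal.ofReal_mul (by positivity)]
    congr 1
    field_simp
  have quarter_nonneg : 0 ≤ τ / 4 := by positivity
  set G₁ := fiberRefine volume G (ENNReal.ofReal (τ / (4 * a)))
  have volume_G₁ : ENNReal.ofReal (τ - τ / 4) ≤ volume G₁ := ofReal_sub_le_of_le_add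
    quarter_nonneg (hGτ.trans (measure_prod_le_fiberRefine_add hG hGE _)) (mul_le ha hEa)
  obtain ⟨G₂, G₂_subset, measurableSet_G₂, volume_le, large_fiber⟩ :=
    exists_incidenceSwap_refinement (measurableSet_fiberRefine (ν := volume) hG _)
      (fun z hz ↦ hGEs z hz.1) (ENNReal.ofReal (τ / (4 * b)))
  refine ⟨G₂, G₂_subset.trans (Set.sep_subset _ _), measurableSet_G₂, ?_, large_fiber⟩
  convert ofReal_sub_le_of_le_add quarter_nonneg (volume_G₁.trans volume_le) (mul_le hb hEsb)
    using 2
  ring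

theorem le_of_ofReal_mul_pow_le {n : ℕ} {P : ℝ} {v D : ℝ≥0∞} (hP : 0 ≤ P) (ha : 0 < a) (hb : 0 < b)
    (hτ : 0 < τ) (hv : ENNReal.ofReal (τ / (4 * a)) ≤ v)
    (hPD : ENNReal.ofReal P * v ^ n ≤ 2 ^ n ^ 2 * D)
    (hD : ENNReal.ofReal (τ / 2) * D ≤ ENNReal.ofReal b ^ (n + 1)) :
    P ≤ 2 ^ n ^ 2 * 2 * 4 ^ n * (a ^ n * b ^ (n + 1) / τ ^ (n + 1)) := by
  have key : τ / 2 * (P * (τ / (4 * a)) ^ n) ≤ 2 ^ n ^ 2 * b ^ (n + 1) := by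
    rw [← ENNReal.ofReal_le_ofReal_iff (by positivity), ENNReal.ofReal_mul (by positivity),
      ENNReal.ofReal_mul hP, ENNReal.ofReal_pow (by positivity),
      ENNReal.ofReal_mul (by positivity), ENNReal.ofReal_pow (by positivity),
      ENNReal.ofReal_pow hb.le, ENNReal.ofReal_ofNat]
    calc _ ≤ ENNReal.ofReal (τ / 2) * (2 ^ n ^ 2 * D) :=
          mul_le_mul_right ((mul_le_mul_right (pow_le_pow_left' hv n) _).trans hPD) _
      _ ≤ 2 ^ n ^ 2 * ENNReal.ofReal b ^ (n + 1) := by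
          rw [mul_left_comm]
          exact mul_le_mul_right hD _
  have expand : 2 ^ n ^ 2 * 2 * 4 ^ n * (a ^ n * b ^ (n + 1) / τ ^ (n + 1)) =
      2 ^ n ^ 2 * b ^ (n + 1) / (τ / 2 * (τ / (4 * a)) ^ n) := by
    rw [div_pow, mul_pow]
    field_simp
    ring
  rw [expand, le_div_iff₀ (by positivity)]
  linarith

theorem exists_fiber_inter_coordBox {n : ℕ} (b₀ : OrthonormalBasis (Fin n) ℝ V)
    (hEs : MeasurableSet Es) (hG : MeasurableSet G) (hGtop : volume G ≠ ⊤)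
    (hGE : ∀ z ∈ G, z.1 ∈ E) (hGEs : ∀ z ∈ G, (incidenceSwap z).1 ∈ Es) (ha : 0 < a) (hb : 0 < b)
    (hτ : 0 < τ) (hEa : volume E ≤ ENNReal.ofReal a) (hEsb : volume Es ≤ ENNReal.ofReal b)
    (hGτ : ENNReal.ofReal τ ≤ volume G) :
    ∃ z ∈ G, ∃ (e : OrthonormalBasis (Fin n) ℝ V) (s : Fin n → ℝ), (∀ i, 0 < s i) ∧
      ENNReal.ofReal (τ / (4 * a)) ≤
        2 ^ n * volume ({w | (z.1, z.2 + w) ∈ G} ∩ coordBox e 0 s) ∧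
      ∏ i, s i ≤ 2 ^ n ^ 2 * 2 * 4 ^ n * (a ^ n * b ^ (n + 1) / τ ^ (n + 1)) := by
  have mul_volume_E_le : ENNReal.ofReal (τ / (4 * a)) * volume E ≤ ENNReal.ofReal (τ / 4) := by
    refine (mul_le_mul_right hEa _).trans_eq ?_
    rw [← ENNReal.ofReal_mul (by positivity)]
    congr 1
    field_simp
  obtain ⟨z, hz, fiber_ge, fiber_ne_top, det_le⟩ := exists_fiber_mul_detMeasure_pi_le b₀ hEs hG
    hGtop hGE hGEs (m := ENNReal.ofReal (τ / 2)) (ENNReal.ofReal_pos.mpr (by positivity)).ne'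
    (ne_top_of_le_ne_top ofReal_ne_top mul_volume_E_le) ((add_le_add_right mul_volume_E_le _).trans
      (by
        rw [← ENNReal.ofReal_add (by positivity) (by positivity)]
        exact (ENNReal.ofReal_le_ofReal (by linarith)).trans hGτ))
  set F : Set V := {w | (z.1, z.2 + w) ∈ G}
  have measurableSet_F : MeasurableSet F := hG.preimage (by fun_prop)
  obtain ⟨e, s, s_pos, volume_F_le, prod_le⟩ := exists_orthonormalBasis_measure_inter_coordBox b₀
    measurableSet_F ((ENNReal.ofReal_pos.mpr (by positivity)).trans_le fiber_ge).ne' fiber_ne_top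
  rw [Fintype.card_fin] at volume_F_le prod_le det_le
  refine ⟨z, hz, e, s, s_pos, fiber_ge.trans volume_F_le, ?_⟩
  rw [detMeasure, withDensity_apply _ (.univ_pi fun _ ↦ measurableSet_F)] at det_le
  rw [← ENNReal.ofReal_prod_of_nonneg fun i _ ↦ (s_pos i).le] at prod_le
  exact le_of_ofReal_mul_pow_le (Finset.prod_nonneg fun i _ ↦ (s_pos i).le) ha hb hτ fiber_ge
    prod_le (det_le.trans (pow_le_pow_left' hEsb _))

theorem ofReal_sq_div_le_mul {n : ℕ} {v : ℝ≥0∞} (ha : 0 < a) (hb : 0 < b) (hτ : 0 < τ)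
    (hv : ENNReal.ofReal (τ / 2 / (4 * a)) ≤ 2 ^ n * v) :
    ENNReal.ofReal (τ ^ 2 / (2 ^ (n + 5) * (a * b))) ≤ ENNReal.ofReal (τ / (4 * b)) * v := by
  refine (ENNReal.mul_le_mul_iff_right (pow_ne_zero n two_ne_zero) (by finiteness)).mp ?_
  calc 2 ^ n * ENNReal.ofReal (τ ^ 2 / (2 ^ (n + 5) * (a * b)))
      = ENNReal.ofReal (2 ^ n * (τ ^ 2 / (2 ^ (n + 5) * (a * b)))) := by
        rw [ENNReal.ofReal_mul (by positivity), ENNReal.ofReal_pow (by positivity),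
          ENNReal.ofReal_ofNat]
    _ = ENNReal.ofReal (τ / (4 * b)) * ENNReal.ofReal (τ / 2 / (4 * a)) := by
        rw [← ENNReal.ofReal_mul (by positivity)]
        congr 1
        field_simp
        ring
    _ ≤ ENNReal.ofReal (τ / (4 * b)) * (2 ^ n * v) := by gcongr
    _ = 2 ^ n * (ENNReal.ofReal (τ / (4 * b)) * v) := mul_left_comm ..

theorem exists_incidenceFrame {n : ℕ} (b₀ : OrthonormalBasis (Fin n) ℝ V) (hEs : MeasurableSet Es)
    (hG : MeasurableSet G) (hGtop : volume G ≠ ⊤) (hGE : ∀ z ∈ G, z.1 ∈ E)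
    (hGEs : ∀ z ∈ G, (incidenceSwap z).1 ∈ Es) (ha : 0 < a) (hb : 0 < b) (hτ : 0 < τ)
    (hEa : volume E ≤ ENNReal.ofReal a) (hEsb : volume Es ≤ ENNReal.ofReal b)
    (hGτ : ENNReal.ofReal τ ≤ volume G) :
    ∃ 𝔉 : IncidenceFrame V n,
      ENNReal.ofReal (τ ^ 2 / (2 ^ (n + 5) * (a * b))) ≤
        volume (𝔉.fan G (ENNReal.ofReal (τ / (4 * a)))) ∧
      τ / (8 * a) ≤ 4 ^ n * ∏ i, 𝔉.s i ∧
      ∏ i, 𝔉.s i ≤ 2 ^ n ^ 2 * 4 * 8 ^ n * (a ^ n * b ^ (n + 1) / τ ^ (n + 1)) := by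
  obtain ⟨G', G'_subset, measurableSet_G', volume_G', large_fiber⟩ :=
    exists_fiberRefine_incidenceSwap_refinement hG hGE hGEs ha hb hτ hEa hEsb hGτ
  obtain ⟨z, -, e, s, s_pos, volume_ge, prod_le⟩ := exists_fiber_inter_coordBox b₀ hEs
    measurableSet_G' (measure_ne_top_of_subset G'_subset hGtop) (fun z hz ↦ hGE z (G'_subset hz))
    (fun z hz ↦ hGEs z (G'_subset hz)) ha hb (half_pos hτ) hEa hEsb volume_G'
  set 𝔉 : IncidenceFrame V n := ⟨z.1.1, z.1.2, z.2, e, s, s_pos⟩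
  set F := (-z.2 + ·) ⁻¹' ({w | (z.1, z.2 + w) ∈ G'} ∩ coordBox e 0 s)
  have volume_F : ENNReal.ofReal (τ / 2 / (4 * a)) ≤ 2 ^ n * volume F :=
    volume_ge.trans_eq (congrArg _ (measure_preimage_add _ _ _).symm)
  have F_subset : F ⊆ coordBox e z.2 s := fun y hy ↦ by
    simpa [coordBox, sub_eq_neg_add] using hy.2
  refine ⟨𝔉, ?_, ?_, ?_⟩
  · have fan_ge := 𝔉.mul_volume_le_volume_fan hG F_subset (t' := ENNReal.ofReal (τ / (4 * b)))
      (t := ENNReal.ofReal (τ / (4 * a))) fun y hy ↦ by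
        have := large_fiber _ hy.1
        simp only [add_neg_cancel_left] at this
        simpa only [𝔉.lift_eq_incidenceSwap] using this
    exact (ofReal_sq_div_le_mul ha hb hτ volume_F).trans fan_ge
  · have := volume_F.trans (mul_le_mul_right (measure_mono F_subset) _)
    rw [volume_coordBox, ← ENNReal.ofReal_prod_of_nonneg fun i _ ↦ by linarith [s_pos i],
      Finset.prod_mul_distrib, Finset.prod_const, Finset.card_univ, Fintype.card_fin,
      ← ENNReal.ofReal_ofNat, ← ENNReal.ofReal_pow (by positivity),
      ← ENNReal.ofReal_mul (by positivity), ← mul_assoc, ← mul_pow] at this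
    convert (ENNReal.ofReal_le_ofReal_iff (mul_nonneg (by positivity) 𝔉.prod_s_pos.le)).mp this
      using 1
    · field_simp
      norm_num
    · norm_num [𝔉]
  · convert prod_le using 1
    have : (8 : ℝ) ^ n = 4 ^ n * 2 ^ n := by rw [← mul_pow]; norm_num
    rw [div_pow, this]
    field_simp
    ring

end ExistsFrame

namespace IncidenceFrame

variable {V : Type*} [NormedAddCommGroup V] [InnerProductSpace ℝ V] {n : ℕ}

/-- The box of points `(x, u)` around the base point on which the frame localizes: its sides are
`T / s i`, dual to those of the box around `y₀`. -/
def xBox (𝔉 : IncidenceFrame V n) (T : ℝ) : Set (V × ℝ) :=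
  shearedBox 𝔉.e 𝔉.x₀ (fun i ↦ T / 𝔉.s i) (fun x ↦ 𝔉.u₀ - 2 * ⟪x - 𝔉.x₀, 𝔉.y₀⟫) (2 * n * T)

theorem lift_mem_xBox (𝔉 : IncidenceFrame V n) {T : ℝ} {p : V × V}
    (hx : p.1 ∈ coordBox 𝔉.e 𝔉.x₀ fun i ↦ T / 𝔉.s i) (hy : p.2 ∈ coordBox 𝔉.e 𝔉.y₀ 𝔉.s) :
    𝔉.lift p ∈ 𝔉.xBox T := by
  refine ⟨hx, ?_⟩
  have inner_le := abs_inner_sub_le_of_mem_coordBox hx hy (K := T)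
    fun i ↦ (div_mul_cancel₀ T (𝔉.s_pos i).ne').le
  rw [Fintype.card_fin] at inner_le
  calc _ = 2 * |⟪p.1 - 𝔉.x₀, p.2 - 𝔉.y₀⟫| := by
        rw [lift, ← abs_two, ← abs_mul, abs_two, ← abs_neg, inner_sub_right]
        ring_nf
    _ ≤ 2 * n * T := by linarith

variable [FiniteDimensional ℝ V] [MeasurableSpace V] [BorelSpace V]

theorem measurableSet_xBox (𝔉 : IncidenceFrame V n) (T : ℝ) : MeasurableSet (𝔉.xBox T) :=
  measurableSet_shearedBox (by fun_prop)

-- For fixed `x`, the height of `lift (x, y)` is affine in `y` with gradient `-2 (x - x₀)`, so it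
-- sweeps a long range if `x` is far from `x₀` in direction `e j`.
theorem volume_mul_ofReal_le_of_lift_mem (𝔉 : IncidenceFrame V n) {D : Set (V × ℝ)}
    (hD : MeasurableSet D) {W : Set (V × V)} (hW : MeasurableSet W) {κ : ℝ} (j : Fin n)
    (h : ∀ p ∈ W, p.2 ∈ coordBox 𝔉.e 𝔉.y₀ 𝔉.s ∧ 𝔉.lift p ∈ D ∧
      κ / 𝔉.s j ≤ |⟪p.1 - 𝔉.x₀, 𝔉.e j⟫|) :
    volume W * ENNReal.ofReal (4 * κ) ≤ ENNReal.ofReal (2 ^ n * ∏ i, 𝔉.s i) * volume D := by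
  have prod_eq : ENNReal.ofReal (2 ^ n * ∏ i, 𝔉.s i) = ENNReal.ofReal (2 * 𝔉.s j) *
      ∏ i ∈ Finset.univ.erase j, ENNReal.ofReal (2 * 𝔉.s i) := by
    rw [Finset.mul_prod_erase Finset.univ (fun i ↦ ENNReal.ofReal (2 * 𝔉.s i))
      (Finset.mem_univ j), ← ENNReal.ofReal_prod_of_nonneg fun i _ ↦ by linarith [𝔉.s_pos i],
      Finset.prod_mul_distrib, Finset.prod_const, Finset.card_univ, Fintype.card_fin]
  rw [Measure.volume_eq_prod, Measure.volume_eq_prod, Measure.prod_apply hW, Measure.prod_apply hD,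
    ← lintegral_mul_const _ (measurable_measure_prodMk_left hW),
    ← lintegral_const_mul _ (measurable_measure_prodMk_left hD)]
  refine lintegral_mono fun x ↦ ?_
  rcases (Prod.mk x ⁻¹' W).eq_empty_or_nonempty with fiber_empty | ⟨y, hy⟩
  · simp only [fiber_empty, measure_empty, zero_mul, zero_le]
  have kappa_le : 4 * κ ≤ 2 * 𝔉.s j * |⟪(-2 : ℝ) • (x - 𝔉.x₀), 𝔉.e j⟫| := by
    have := (div_le_iff₀ (𝔉.s_pos j)).mp (h _ hy).2.2
    rw [real_inner_smul_left, abs_mul, abs_neg, abs_two]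
    linarith
  have fiber_subset : Prod.mk x ⁻¹' W ⊆ {y ∈ coordBox 𝔉.e 𝔉.y₀ 𝔉.s |
      𝔉.u₀ - 2 * ⟪x - 𝔉.x₀, 𝔉.y₀⟫ + ⟪(-2 : ℝ) • (x - 𝔉.x₀), y - 𝔉.y₀⟫ ∈ Prod.mk x ⁻¹' D} := by
    refine fun y hy ↦ ⟨(h _ hy).1, ?_⟩
    change (x, _) ∈ D
    convert (h _ hy).2.1 using 1
    simp only [lift, real_inner_smul_left, inner_sub_right]
    ring_nf
  calc volume (Prod.mk x ⁻¹' W) * ENNReal.ofReal (4 * κ)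
      ≤ volume (Prod.mk x ⁻¹' W) *
          ENNReal.ofReal (2 * 𝔉.s j * |⟪(-2 : ℝ) • (x - 𝔉.x₀), 𝔉.e j⟫|) := by gcongr
    _ = ENNReal.ofReal (2 * 𝔉.s j) * (ENNReal.ofReal |⟪(-2 : ℝ) • (x - 𝔉.x₀), 𝔉.e j⟫| *
          volume (Prod.mk x ⁻¹' W)) := by
        rw [ENNReal.ofReal_mul (by linarith [𝔉.s_pos j]), mul_comm, mul_assoc]
    _ ≤ ENNReal.ofReal (2 ^ n * ∏ i, 𝔉.s i) * volume (Prod.mk x ⁻¹' D) := by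
        rw [prod_eq, mul_assoc]
        exact mul_le_mul_right ((mul_le_mul_right (measure_mono fiber_subset) _).trans
          (ofReal_abs_inner_mul_volume_slab_le _ _ _ _ _ _ (measurable_prodMk_left hD))) _

theorem volume_prod_coordBox_ite (𝔉 : IncidenceFrame V n) {T δ : ℝ} (hT : 0 ≤ T) (hδ : 0 ≤ δ)
    (j : Fin n) :
    volume ((coordBox 𝔉.e 𝔉.x₀ fun i ↦ (if i = j then δ else 1) * (T / 𝔉.s i)) ×ˢ
      coordBox 𝔉.e 𝔉.y₀ 𝔉.s) = ENNReal.ofReal ((4 * T) ^ n * δ) := by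
  have factor (i : Fin n) : 2 * ((if i = j then δ else 1) * (T / 𝔉.s i)) * (2 * 𝔉.s i) =
      4 * T * (if i = j then δ else 1) := by
    have := (𝔉.s_pos i).ne'
    field_simp
    ring
  have s_nonneg (i : Fin n) := (𝔉.s_pos i).le
  have ite_nonneg (i : Fin n) : 0 ≤ if i = j then δ else 1 := by positivity
  rw [Measure.volume_eq_prod, Measure.prod_prod, volume_coordBox, volume_coordBox,
    ← Finset.prod_mul_distrib]
  calc _ = ∏ i, ENNReal.ofReal (4 * T * if i = j then δ else 1) :=
        Finset.prod_congr rfl fun i _ ↦ by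
          have := s_nonneg i
          have := ite_nonneg i
          rw [← factor, ← ENNReal.ofReal_mul (by positivity)]
    _ = ENNReal.ofReal (∏ i, 4 * T * if i = j then δ else 1) :=
        (ENNReal.ofReal_prod_of_nonneg fun i _ ↦ by have := ite_nonneg i; positivity).symm
    _ = _ := by
        rw [Finset.prod_mul_distrib, Finset.prod_const, Finset.card_univ, Fintype.card_fin,
          Finset.prod_ite_eq' _ _ fun _ ↦ δ, if_pos (Finset.mem_univ j)]

theorem setOf_le_volume_fiber_subset {E : Set (V × ℝ)} {G : Set ((V × ℝ) × V)}
    (hGE : ∀ z ∈ G, z.1 ∈ E) {t : ℝ≥0∞} (ht : t ≠ 0) :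
    {p | t ≤ volume (Prod.mk p ⁻¹' G)} ⊆ E := fun p hp ↦ by
  obtain ⟨y, hy⟩ := nonempty_of_measure_ne_zero (ht.bot_lt.trans_le hp).ne'
  exact hGE _ hy

section Localize

variable (𝔉 : IncidenceFrame V n) {E : Set (V × ℝ)} {G : Set ((V × ℝ) × V)} {a ω T δ : ℝ}
  {t : ℝ≥0∞}

theorem volume_fan_inter_far_le (hG : MeasurableSet G) (hGE : ∀ z ∈ G, z.1 ∈ E)
    (hEa : volume E ≤ ENNReal.ofReal a) (ht : t ≠ 0) (hT : 0 < T)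
    (hTω : n * 2 ^ n * (∏ i, 𝔉.s i) * a ≤ ω * T) (i : Fin n) :
    volume (𝔉.fan G t ∩ {p | T / 𝔉.s i < |⟪p.1 - 𝔉.x₀, 𝔉.e i⟫|}) ≤
      ENNReal.ofReal (ω / (4 * n)) := by
  have n_pos : (0 : ℝ) < n := by exact_mod_cast i.pos
  have prod_pos := 𝔉.prod_s_pos
  have measurableSet_far : MeasurableSet {p : V × V | T / 𝔉.s i < |⟪p.1 - 𝔉.x₀, 𝔉.e i⟫|} :=
    measurableSet_lt measurable_const (by fun_prop)
  have slab := 𝔉.volume_mul_ofReal_le_of_lift_mem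
    (measurableSet_le measurable_const (measurable_measure_prodMk_left hG))
    ((𝔉.measurableSet_fan hG t).inter measurableSet_far) i (κ := T)
    (fun p hp ↦ ⟨hp.1.1, hp.1.2, hp.2.le⟩)
  refine (ENNReal.mul_le_mul_iff_left (ENNReal.ofReal_pos.mpr (by positivity : 0 < 4 * T)).ne'
    ofReal_ne_top).mp (slab.trans ?_)
  rw [← ENNReal.ofReal_mul' (by positivity)]
  refine (mul_le_mul_right ((measure_mono (setOf_le_volume_fiber_subset hGE ht)).trans hEa)
    _).trans ?_
  rw [← ENNReal.ofReal_mul (by positivity)]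
  refine ENNReal.ofReal_le_ofReal ?_
  rw [div_mul_eq_mul_div, le_div_iff₀ (by positivity)]
  linarith

/-- The pairs of the fan that lift to the box `xBox` and are not too close to the base point in
direction `e j`. -/
def middleFan (G : Set ((V × ℝ) × V)) (t : ℝ≥0∞) (T δ : ℝ) (j : Fin n) : Set (V × V) :=
  𝔉.fan G t ∩ {p | 𝔉.lift p ∈ 𝔉.xBox T ∧ δ * T / 𝔉.s j ≤ |⟪p.1 - 𝔉.x₀, 𝔉.e j⟫|}

theorem measurableSet_middleFan (hG : MeasurableSet G) (t : ℝ≥0∞) (T δ : ℝ) (j : Fin n) :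
    MeasurableSet (𝔉.middleFan G t T δ j) := by
  have measurableSet_apart :
      MeasurableSet {p : V × V | δ * T / 𝔉.s j ≤ |⟪p.1 - 𝔉.x₀, 𝔉.e j⟫|} :=
    measurableSet_le measurable_const (by fun_prop)
  exact (𝔉.measurableSet_fan hG t).inter
    (((𝔉.measurableSet_xBox T).preimage 𝔉.measurable_lift).inter measurableSet_apart)

theorem fan_subset_union (j : Fin n) :
    𝔉.fan G t ⊆ 𝔉.middleFan G t T δ j ∪
      ((coordBox 𝔉.e 𝔉.x₀ fun i ↦ (if i = j then δ else 1) * (T / 𝔉.s i)) ×ˢ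
          coordBox 𝔉.e 𝔉.y₀ 𝔉.s ∪
        ⋃ i, 𝔉.fan G t ∩ {p | T / 𝔉.s i < |⟪p.1 - 𝔉.x₀, 𝔉.e i⟫|}) := by
  intro p hp
  by_cases near : p.1 ∈ coordBox 𝔉.e 𝔉.x₀ fun i ↦ T / 𝔉.s i
  · rcases le_or_gt (δ * T / 𝔉.s j) |⟪p.1 - 𝔉.x₀, 𝔉.e j⟫| with apart | close
    · exact .inl ⟨hp, 𝔉.lift_mem_xBox near hp.1, apart⟩
    · refine .inr (.inl ⟨fun i ↦ ?_, hp.1⟩)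
      dsimp only
      split_ifs with hij
      · rw [hij, ← mul_div_assoc]
        exact close.le
      · rw [one_mul]
        exact near i
  · obtain ⟨i, hi⟩ := not_forall.mp near
    exact .inr (.inr (Set.mem_iUnion.mpr ⟨i, hp, not_le.mp hi⟩))

theorem ofReal_half_le_volume_middleFan (hG : MeasurableSet G) (hGE : ∀ z ∈ G, z.1 ∈ E)
    (hEa : volume E ≤ ENNReal.ofReal a) (ht : t ≠ 0) (hT : 0 < T) (hδ : 0 ≤ δ)
    (hTω : n * 2 ^ n * (∏ i, 𝔉.s i) * a ≤ ω * T) (hδω : 4 * (4 * T) ^ n * δ ≤ ω)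
    (hfan : ENNReal.ofReal ω ≤ volume (𝔉.fan G t)) (j : Fin n) :
    ENNReal.ofReal (ω / 2) ≤ volume (𝔉.middleFan G t T δ j) := by
  have n_pos : (0 : ℝ) < n := by exact_mod_cast j.pos
  have ω_nonneg : 0 ≤ ω := le_trans (by positivity) hδω
  rw [show ω / 2 = ω - (ω / 4 + n * (ω / (4 * n))) by field_simp; ring]
  refine ofReal_sub_le_of_le_add (by positivity)
    (hfan.trans ((measure_mono (𝔉.fan_subset_union j)).trans (measure_union_le _ _))) ?_
  rw [ENNReal.ofReal_add (by positivity) (by positivity)]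
  refine (measure_union_le _ _).trans (add_le_add ?_ ?_)
  · rw [𝔉.volume_prod_coordBox_ite hT.le hδ]
    exact ENNReal.ofReal_le_ofReal (by linarith)
  · refine (measure_iUnion_fintype_le _ _).trans ((Finset.sum_le_sum fun i _ ↦
      𝔉.volume_fan_inter_far_le hG hGE hEa ht hT hTω i).trans_eq ?_)
    rw [Finset.sum_const, Finset.card_univ, Fintype.card_fin, nsmul_eq_mul,
      ENNReal.ofReal_mul n_pos.le, ENNReal.ofReal_natCast]

theorem ofReal_le_volume_inter_xBox (hG : MeasurableSet G) (hT : 0 < T) (hδ : 0 < δ) {q : ℝ}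
    (hq : 2 ^ n * (∏ i, 𝔉.s i) * q ≤ 2 * δ * (ω * T)) (j : Fin n)
    (hmiddle : ENNReal.ofReal (ω / 2) ≤ volume (𝔉.middleFan G t T δ j)) :
    ENNReal.ofReal q ≤ volume ({p | t ≤ volume (Prod.mk p ⁻¹' G)} ∩ 𝔉.xBox T) := by
  have prod_pos := 𝔉.prod_s_pos
  have slab := 𝔉.volume_mul_ofReal_le_of_lift_mem
    ((measurableSet_le measurable_const (measurable_measure_prodMk_left hG)).inter
      (𝔉.measurableSet_xBox T)) (𝔉.measurableSet_middleFan hG t T δ j) j (κ := δ * T)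
    (fun p hp ↦ ⟨hp.1.1, ⟨hp.1.2, hp.2.1⟩, hp.2.2⟩)
  refine (ENNReal.mul_le_mul_iff_right
    (ENNReal.ofReal_pos.mpr (by positivity : 0 < 2 ^ n * ∏ i, 𝔉.s i)).ne' ofReal_ne_top).mp
    (le_trans ?_ ((mul_le_mul_left hmiddle _).trans slab))
  rw [← ENNReal.ofReal_mul (by positivity), ← ENNReal.ofReal_mul' (by positivity)]
  exact ENNReal.ofReal_le_ofReal (by linarith)

theorem ofReal_le_volume_inter_preimage_xBox {τ : ℝ} (hG : MeasurableSet G)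
    (hGE : ∀ z ∈ G, z.1 ∈ E) (ha : 0 < a) (hτ : 0 < τ) (hEa : volume E ≤ ENNReal.ofReal a)
    (hT : 0 < T) (hδ : 0 < δ) (hTω : n * 2 ^ n * (∏ i, 𝔉.s i) * a ≤ ω * T)
    (hδω : 4 * (4 * T) ^ n * δ ≤ ω)
    (hfan : ENNReal.ofReal ω ≤ volume (𝔉.fan G (ENNReal.ofReal (τ / (4 * a))))) (j : Fin n) :
    ENNReal.ofReal (δ / 2 * τ) ≤ volume (G ∩ Prod.fst ⁻¹' 𝔉.xBox T) := by
  have heavy := 𝔉.ofReal_le_volume_inter_xBox hG hT hδ (q := 2 * δ * a) (by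
      have one_le : (1 : ℝ) ≤ n := by exact_mod_cast j.pos
      have prod_pos := 𝔉.prod_s_pos
      have : 2 ^ n * (∏ i, 𝔉.s i) * a ≤ n * (2 ^ n * (∏ i, 𝔉.s i) * a) :=
        le_mul_of_one_le_left (by positivity) one_le
      calc _ = 2 * δ * (2 ^ n * (∏ i, 𝔉.s i) * a) := by ring
        _ ≤ 2 * δ * (ω * T) := mul_le_mul_of_nonneg_left (by linarith) (by positivity)) j
    (𝔉.ofReal_half_le_volume_middleFan hG hGE hEa
      (ENNReal.ofReal_pos.mpr (by positivity)).ne' hT hδ.le hTω hδω hfan j)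
  calc ENNReal.ofReal (δ / 2 * τ)
      = ENNReal.ofReal (τ / (4 * a)) * ENNReal.ofReal (2 * δ * a) := by
        rw [← ENNReal.ofReal_mul (by positivity)]
        congr 1
        field_simp
        norm_num
    _ ≤ _ := (mul_le_mul_right heavy _).trans <|
        mul_measure_le_measure_prod (hG.inter ((𝔉.measurableSet_xBox T).preimage measurable_fst))
          fun p hp ↦ hp.1.trans (measure_mono fun y hy ↦ ⟨hy, hp.2⟩)

end Localize

end IncidenceFrame

/-- The ball `ℬ` of the theorem in the coordinates `((x, u), y)`, in which a point is incident
to a dual point if `u + v + 2 * ⟪x, y⟫ = 0`. -/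
def bilinearBall {V ι : Type*} [NormedAddCommGroup V] [InnerProductSpace ℝ V] (z₀ : (V × ℝ) × V)
    (e : ι → V) (r rs : ι → ℝ) (ρ : ℝ) : Set ((V × ℝ) × V) :=
  {z | (∀ j, |⟪z.1.1 - z₀.1.1, e j⟫| < r j) ∧ (∀ j, |⟪z.2 - z₀.2, e j⟫| < rs j) ∧
    |z.1.2 - z₀.1.2 + 2 * ⟪z.1.1 - z₀.1.1, z₀.2⟫| < ρ ∧
    |z.1.2 - z₀.1.2 + 2 * ⟪z.1.1 - z₀.1.1, z.2⟫| < ρ}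

theorem mul_le_prod_two_mul_of_ofReal_le_volume_slab {V ι : Type*} [NormedAddCommGroup V]
    [InnerProductSpace ℝ V] [FiniteDimensional ℝ V] [MeasurableSpace V] [BorelSpace V] [Fintype ι]
    (e : OrthonormalBasis ι ℝ V) (x₀ : V) {s : ι → ℝ} (hs : ∀ i, 0 < s i) (a : V) (j : ι) (b : ℝ)
    {m w : ℝ} {S : Set ℝ} (hw : 0 ≤ w) (hS : MeasurableSet S) (hSw : volume S = ENNReal.ofReal w)
    (h : ENNReal.ofReal m ≤ volume {x ∈ coordBox e x₀ s | b + ⟪a, x - x₀⟫ ∈ S}) :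
    2 * s j * (|⟪a, e j⟫| * m) ≤ (∏ i, 2 * s i) * w := by
  classical
  have side_pos (i : ι) : 0 < 2 * s i := by linarith [hs i]
  rw [← ENNReal.ofReal_le_ofReal_iff
    (mul_nonneg (Finset.prod_nonneg fun i _ ↦ (side_pos i).le) hw)]
  calc ENNReal.ofReal (2 * s j * (|⟪a, e j⟫| * m))
      = ENNReal.ofReal (2 * s j) * (ENNReal.ofReal |⟪a, e j⟫| * ENNReal.ofReal m) := by
        rw [ENNReal.ofReal_mul (side_pos j).le, ENNReal.ofReal_mul (abs_nonneg _)]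
    _ ≤ ENNReal.ofReal (2 * s j) *
          ((∏ i ∈ Finset.univ.erase j, ENNReal.ofReal (2 * s i)) * volume S) :=
        mul_le_mul_right ((mul_le_mul_right h _).trans
          (ofReal_abs_inner_mul_volume_slab_le e x₀ s a j b hS)) _
    _ = ENNReal.ofReal ((∏ i, 2 * s i) * w) := by
        rw [← mul_assoc, Finset.mul_prod_erase _ (fun i ↦ ENNReal.ofReal (2 * s i))
          (Finset.mem_univ j), hSw, ← ENNReal.ofReal_prod_of_nonneg fun i _ ↦ (side_pos i).le,
          ENNReal.ofReal_mul (Finset.prod_nonneg fun i _ ↦ (side_pos i).le)]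

namespace IncidenceFrame

variable {V : Type*} [NormedAddCommGroup V] [InnerProductSpace ℝ V] {n : ℕ}

section Coordinates

variable (𝔉 : IncidenceFrame V n) {T H σ l : ℝ} {z z₀ : (V × ℝ) × V}

/-- The coordinates of an incidence in the frame, normalized so that `xBox` and the box around
`y₀` have sides of order one. -/
def coord (T : ℝ) : (Fin n ⊕ Fin n) ⊕ Unit → (V × ℝ) × V → ℝ
  | .inl (.inl j), z => ⟪z.1.1 - 𝔉.x₀, 𝔉.e j⟫ / (T / 𝔉.s j)
  | .inl (.inr j), z => ⟪z.2 - 𝔉.y₀, 𝔉.e j⟫ / 𝔉.s j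
  | .inr _, z => (z.1.2 - (𝔉.u₀ - 2 * ⟪z.1.1 - 𝔉.x₀, 𝔉.y₀⟫)) / T

theorem abs_coord_le (hT : 0 < T) (hH : 0 ≤ H) (hx : z.1 ∈ 𝔉.xBox T)
    (hy : z.2 ∈ coordBox 𝔉.e 𝔉.y₀ fun j ↦ H * 𝔉.s j) (i : (Fin n ⊕ Fin n) ⊕ Unit) :
    |𝔉.coord T i z| ≤ (1 + 2 * n) * (1 + H) := by
  have nH_nonneg : 0 ≤ n * H := by positivity
  have : (0 : ℝ) ≤ n := n.cast_nonneg
  rcases i with (j | j) | _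
  · have side_pos := div_pos hT (𝔉.s_pos j)
    rw [coord, abs_div, abs_of_pos side_pos]
    exact (div_le_one_of_le₀ (hx.1 j) side_pos.le).trans (by linarith)
  · rw [coord, abs_div, abs_of_pos (𝔉.s_pos j)]
    exact ((div_le_iff₀ (𝔉.s_pos j)).mpr (hy j)).trans (by linarith)
  · rw [coord, abs_div, abs_of_pos hT]
    exact ((div_le_iff₀ hT).mpr hx.2).trans (by linarith)

theorem abs_affine_lt (hT : 0 < T)
    (h : ∀ i, |𝔉.coord T i z - 𝔉.coord T i z₀| < σ) {y : V}
    (hy : y ∈ coordBox 𝔉.e 𝔉.y₀ fun j ↦ H * 𝔉.s j) :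
    |z.1.2 - z₀.1.2 + 2 * ⟪z.1.1 - z₀.1.1, y⟫| < (1 + 2 * n * H) * (σ * T) := by
  have height_lt : |z.1.2 - z₀.1.2 + 2 * ⟪z.1.1 - z₀.1.1, 𝔉.y₀⟫| < σ * T := by
    have := h (.inr ())
    rw [coord, coord, ← sub_div, abs_div, abs_of_pos hT, div_lt_iff₀ hT] at this
    rw [← sub_sub_sub_cancel_right z.1.1 z₀.1.1 𝔉.x₀, inner_sub_left]
    exact (congrArg _ (by ring)).trans_lt this
  have x_mem : z.1.1 ∈ coordBox 𝔉.e z₀.1.1 fun j ↦ σ * (T / 𝔉.s j) := fun j ↦ by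
    have side_pos := div_pos hT (𝔉.s_pos j)
    have := h (.inl (.inl j))
    rw [coord, coord, ← sub_div, ← inner_sub_left, sub_sub_sub_cancel_right, abs_div,
      abs_of_pos side_pos, div_lt_iff₀ side_pos] at this
    exact this.le
  have inner_le := abs_inner_sub_le_of_mem_coordBox x_mem hy (K := σ * H * T) fun j ↦ by
    have := (𝔉.s_pos j).ne'
    field_simp
    exact le_rfl
  rw [Fintype.card_fin] at inner_le
  calc _ = |z.1.2 - z₀.1.2 + 2 * ⟪z.1.1 - z₀.1.1, 𝔉.y₀⟫
        + 2 * ⟪z.1.1 - z₀.1.1, y - 𝔉.y₀⟫| := by rw [inner_sub_right]; ring_nf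
    _ ≤ |z.1.2 - z₀.1.2 + 2 * ⟪z.1.1 - z₀.1.1, 𝔉.y₀⟫|
        + 2 * |⟪z.1.1 - z₀.1.1, y - 𝔉.y₀⟫| := by
        rw [← abs_two (α := ℝ), ← abs_mul, abs_two]
        exact abs_add_le _ _
    _ < σ * T + 2 * (n * (σ * H * T)) := by linarith
    _ = _ := by ring

theorem mem_bilinearBall_of_abs_coord_sub_lt (hT : 0 < T) (hl : 0 < l) (hH : 0 ≤ H)
    (h : ∀ i, |𝔉.coord T i z - 𝔉.coord T i z₀| < l ^ 2 / ((1 + 2 * n) * (1 + H))) (hl1 : l ≤ 1)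
    (hy : z.2 ∈ coordBox 𝔉.e 𝔉.y₀ fun j ↦ H * 𝔉.s j)
    (hy₀ : z₀.2 ∈ coordBox 𝔉.e 𝔉.y₀ fun j ↦ H * 𝔉.s j) :
    z ∈ bilinearBall z₀ 𝔉.e (fun j ↦ l * (T / 𝔉.s j)) (fun j ↦ l * 𝔉.s j) (l ^ 2 * T) := by
  have one_le : 1 ≤ (1 + 2 * n) * (1 + H) := by
    have : 0 ≤ n * H := by positivity
    linarith [n.cast_nonneg (α := ℝ)]
  have cell_le : l ^ 2 / ((1 + 2 * n) * (1 + H)) ≤ l :=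
    (div_le_self (sq_nonneg l) one_le).trans (by nlinarith)
  have affine_le : (1 + 2 * n * H) * (l ^ 2 / ((1 + 2 * n) * (1 + H)) * T) ≤ l ^ 2 * T := by
    rw [← mul_assoc, mul_div_left_comm]
    refine mul_le_mul_of_nonneg_right (mul_le_of_le_one_right (sq_nonneg l) ?_) hT.le
    rw [div_le_one (by positivity)]
    linarith [n.cast_nonneg (α := ℝ)]
  refine ⟨fun j ↦ ?_, fun j ↦ ?_, (𝔉.abs_affine_lt hT h hy₀).trans_le affine_le,
    (𝔉.abs_affine_lt hT h hy).trans_le affine_le⟩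
  · have side_pos := div_pos hT (𝔉.s_pos j)
    have := (h (.inl (.inl j))).trans_le cell_le
    rwa [coord, coord, ← sub_div, ← inner_sub_left, sub_sub_sub_cancel_right, abs_div,
      abs_of_pos side_pos, div_lt_iff₀ side_pos] at this
  · have := (h (.inl (.inr j))).trans_le cell_le
    rwa [coord, coord, ← sub_div, ← inner_sub_left, sub_sub_sub_cancel_right, abs_div,
      abs_of_pos (𝔉.s_pos j), div_lt_iff₀ (𝔉.s_pos j)] at this

end Coordinates

variable [FiniteDimensional ℝ V] [MeasurableSpace V] [BorelSpace V] (𝔉 : IncidenceFrame V n)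
  {T H l : ℝ} {G : Set ((V × ℝ) × V)}

theorem exists_volume_le_mul_volume_inter_bilinearBall (hT : 0 < T) (hH : 0 ≤ H) (hl : 0 < l)
    (hl1 : l ≤ 1) (hG : volume G ≠ 0) (hx : ∀ z ∈ G, z.1 ∈ 𝔉.xBox T)
    (hy : ∀ z ∈ G, z.2 ∈ coordBox 𝔉.e 𝔉.y₀ fun j ↦ H * 𝔉.s j) :
    ∃ z₀ : (V × ℝ) × V,
      volume G ≤ ENNReal.ofReal ((5 * ((1 + 2 * n) * (1 + H)) ^ 2 / l ^ 2) ^ (2 * n + 1)) *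
        volume (G ∩ bilinearBall z₀ 𝔉.e (fun j ↦ l * (T / 𝔉.s j)) (fun j ↦ l * 𝔉.s j)
          (l ^ 2 * T)) := by
  have one_le : 1 ≤ (1 + 2 * n) * (1 + H) := by
    have : 0 ≤ n * H := by positivity
    linarith [n.cast_nonneg (α := ℝ)]
  have cell_pos : 0 < l ^ 2 / ((1 + 2 * n) * (1 + H)) := by positivity
  have cell_le : l ^ 2 / ((1 + 2 * n) * (1 + H)) ≤ (1 + 2 * n) * (1 + H) :=
    (div_le_self (sq_nonneg l) one_le).trans ((pow_le_one₀ hl.le hl1).trans one_le)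
  obtain ⟨z₀, hz₀, volume_le⟩ := exists_measure_le_mul_measure_forall_abs_sub_lt hG cell_pos
    cell_le fun i z hz ↦ 𝔉.abs_coord_le hT hH (hx z hz) (hy z hz) i
  refine ⟨z₀, volume_le.trans (mul_le_mul' (le_of_eq ?_) (measure_mono fun z hz ↦ ⟨hz.1,
    𝔉.mem_bilinearBall_of_abs_coord_sub_lt hT hl hH hz.2 hl1 (hy z hz.1) (hy z₀ hz₀)⟩))⟩
  rw [Fintype.card_sum, Fintype.card_sum, Fintype.card_fin, Fintype.card_unit, ← two_mul,
    div_div_eq_mul_div, mul_assoc, ← sq]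

theorem abs_inner_le_of_le_volume (hT : 0 < T) {y : V} {c m : ℝ} (hm : 0 < m)
    (h : ENNReal.ofReal m ≤ volume {x | (x, c - 2 * ⟪x, y⟫) ∈ 𝔉.xBox T}) (j : Fin n) :
    |⟪y - 𝔉.y₀, 𝔉.e j⟫| ≤ n * 2 ^ n * T ^ n / (m * ∏ i, 𝔉.s i) * 𝔉.s j := by
  have side_pos (i : Fin n) : 0 < T / 𝔉.s i := div_pos hT (𝔉.s_pos i)
  have nT_nonneg : 0 ≤ n * T := by positivity
  have s_pos := 𝔉.s_pos j
  have prod_pos := 𝔉.prod_s_pos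
  have subset : {x | (x, c - 2 * ⟪x, y⟫) ∈ 𝔉.xBox T} ⊆
      {x ∈ coordBox 𝔉.e 𝔉.x₀ fun i ↦ T / 𝔉.s i |
        c - 2 * ⟪𝔉.x₀, y⟫ - 𝔉.u₀ + ⟪(-2 : ℝ) • (y - 𝔉.y₀), x - 𝔉.x₀⟫ ∈
          Set.Icc (-(2 * n * T)) (2 * n * T)} := fun x hx ↦ by
    refine ⟨hx.1, ?_⟩
    convert abs_le.mp hx.2 using 1
    rw [Set.mem_Icc, real_inner_smul_left]
    simp only [inner_sub_left, inner_sub_right, real_inner_comm x, real_inner_comm 𝔉.x₀]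
    ring_nf
  have slab := mul_le_prod_two_mul_of_ofReal_le_volume_slab 𝔉.e 𝔉.x₀ side_pos _ j _
    (by linarith) measurableSet_Icc Real.volume_Icc (h.trans (measure_mono subset))
  rw [Finset.prod_mul_distrib, Finset.prod_div_distrib, Finset.prod_const, Finset.prod_const,
    Finset.card_univ, Fintype.card_fin, real_inner_smul_left, abs_mul, abs_neg, abs_two] at slab
  rw [div_mul_eq_mul_div, le_div_iff₀ (by positivity)]
  refine le_of_mul_le_mul_left ?_ (show 0 < 4 * T / (𝔉.s j * ∏ i, 𝔉.s i) by positivity)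
  refine (le_of_eq ?_).trans (slab.trans_eq ?_)
  · field_simp
    ring
  · field_simp
    ring

theorem exists_refinement_snd_mem_coordBox (hT : 0 < T) {Es : Set (V × ℝ)} {b q : ℝ}
    (hG : MeasurableSet G) (hGEs : ∀ z ∈ G, (incidenceSwap z).1 ∈ Es) (hb : 0 < b) (hq : 0 < q)
    (hEsb : volume Es ≤ ENNReal.ofReal b) (hx : ∀ z ∈ G, z.1 ∈ 𝔉.xBox T)
    (hGq : ENNReal.ofReal q ≤ volume G) :
    ∃ G' ⊆ G, ENNReal.ofReal (q / 2) ≤ volume G' ∧ ∀ z ∈ G', z.2 ∈ coordBox 𝔉.e 𝔉.y₀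
      fun j ↦ n * 2 ^ n * T ^ n / (q / (2 * b) * ∏ i, 𝔉.s i) * 𝔉.s j := by
  obtain ⟨G', G'_subset, -, volume_le, large_fiber⟩ :=
    exists_incidenceSwap_refinement hG hGEs (ENNReal.ofReal (q / (2 * b)))
  refine ⟨G', G'_subset, ?_, fun z hz ↦ 𝔉.abs_inner_le_of_le_volume hT (by positivity)
    (c := z.1.2 + 2 * ⟪z.1.1, z.2⟫) ((large_fiber z hz).trans (measure_mono fun x hmem ↦ ?_))⟩
  · have mul_le : ENNReal.ofReal (q / (2 * b)) * volume Es ≤ ENNReal.ofReal (q / 2) := by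
      refine (mul_le_mul_right hEsb _).trans_eq ?_
      rw [← ENNReal.ofReal_mul (by positivity)]
      congr 1
      field_simp
    convert ofReal_sub_le_of_le_add (by positivity) (hGq.trans volume_le) mul_le using 2
    ring
  · change (x, _) ∈ 𝔉.xBox T
    convert hx _ hmem using 1
    simp only [incidenceSwap, real_inner_comm x]
    ring_nf

end IncidenceFrame

section Scales

variable {n : ℕ} {C₁ ε a b τ P κ : ℝ}

theorem eps_mul_prod_mul_le (ha : 0 < a) (hε : 0 < ε) (hC₁ : 0 < C₁) (hτ : 0 < τ)
    (hP : P ≤ C₁ * (a ^ n * b ^ (n + 1) / τ ^ (n + 1)))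
    (hετ : ε * (a * b) ^ (n + 1) ≤ τ ^ (n + 2)) : ε * (P * a) ≤ C₁ * τ :=
  calc ε * (P * a) ≤ ε * (C₁ * (a ^ n * b ^ (n + 1) / τ ^ (n + 1)) * a) := by gcongr
    _ = C₁ * (ε * (a * b) ^ (n + 1)) / τ ^ (n + 1) := by rw [mul_pow]; ring
    _ ≤ C₁ * τ ^ (n + 2) / τ ^ (n + 1) := by gcongr
    _ = C₁ * τ := by field_simp; ring

theorem eps_mul_pow_le_prod_mul (hτ : 0 < τ) (hP : τ ≤ 8 * 4 ^ n * (P * a))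
    (hετ : ε * (a * b) ^ (n + 1) ≤ τ ^ (n + 2)) :
    ε * (a * b) ^ (n + 1) ≤ 8 * 4 ^ n * (τ ^ (n + 1) * (P * a)) :=
  calc ε * (a * b) ^ (n + 1) ≤ τ ^ (n + 1) * τ := hετ
    _ ≤ τ ^ (n + 1) * (8 * 4 ^ n * (P * a)) := by gcongr
    _ = _ := by ring

theorem prod_mul_le_mul_scale (ha : 0 < a) (hb : 0 < b) (hε : 0 < ε) (hτ : 0 < τ)
    (hP : ε * (P * a) ≤ C₁ * τ) :
    n * 2 ^ n * P * a ≤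
      τ ^ 2 / (2 ^ (n + 5) * (a * b)) * (n * 2 ^ (2 * n + 5) * C₁ * (a * b) / (ε * τ)) :=
  calc n * 2 ^ n * P * a = n * 2 ^ n * (ε * (P * a)) / ε := by field_simp
    _ ≤ n * 2 ^ n * (C₁ * τ) / ε := by gcongr
    _ = _ := by
      field_simp
      ring

theorem four_mul_scale_pow_mul_le (ha : 0 < a) (hb : 0 < b) (hε : 0 < ε) (hτ : 0 < τ)
    (hκ : 0 < κ) (hετ : ε * (a * b) ^ (n + 1) ≤ τ ^ (n + 2)) :
    4 * (4 * (κ * (a * b) / (ε * τ))) ^ n *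
        (ε ^ (n + 1) / (2 ^ (n + 5) * 4 ^ (n + 1) * κ ^ n)) ≤
      τ ^ 2 / (2 ^ (n + 5) * (a * b)) :=
  calc _ = ε * (a * b) ^ (n + 1) / (2 ^ (n + 5) * (a * b) * τ ^ n) := by
        rw [mul_pow, div_pow, mul_pow, mul_pow]
        field_simp
        ring
    _ ≤ τ ^ (n + 2) / (2 ^ (n + 5) * (a * b) * τ ^ n) := by gcongr
    _ = _ := by
        field_simp
        ring

theorem dual_side_le (ha : 0 < a) (hε : 0 < ε) (hτ : 0 < τ) (hP₀ : 0 < P)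
    (hκ : 0 < κ) {μ : ℝ} (hμ : 0 < μ)
    (hP : ε * (a * b) ^ (n + 1) ≤ 8 * 4 ^ n * (τ ^ (n + 1) * (P * a))) :
    n * 2 ^ n * (κ * (a * b) / (ε * τ)) ^ n /
        (ε ^ (n + 1) / μ / 2 * τ / (2 * b) * P) ≤
      n * 2 ^ (n + 2) * μ * κ ^ n * (8 * 4 ^ n) / ε ^ (2 * n + 2) :=
  calc _ = n * 2 ^ (n + 2) * μ * κ ^ n * (ε * (a * b) ^ (n + 1)) /
          (ε ^ (2 * n + 2) * (τ ^ (n + 1) * (P * a))) := by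
        rw [div_pow, mul_pow, mul_pow]
        field_simp
        ring
    _ ≤ n * 2 ^ (n + 2) * μ * κ ^ n * (8 * 4 ^ n * (τ ^ (n + 1) * (P * a))) /
          (ε ^ (2 * n + 2) * (τ ^ (n + 1) * (P * a))) := by gcongr
    _ = _ := by field_simp

theorem scale_pow_succ_div_prod_le (ha : 0 < a) (hε : 0 < ε) (hτ : 0 < τ)
    (hP₀ : 0 < P) (hκ : 0 < κ)
    (hP : ε * (a * b) ^ (n + 1) ≤ 8 * 4 ^ n * (τ ^ (n + 1) * (P * a))) :
    ε ^ (n + 2) * ((κ * (a * b) / (ε * τ)) ^ (n + 1) / P) ≤ 8 * 4 ^ n * κ ^ (n + 1) * a :=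
  calc _ = κ ^ (n + 1) * (ε * (a * b) ^ (n + 1)) / (τ ^ (n + 1) * P) := by
        rw [div_pow, mul_pow, mul_pow]
        field_simp
        ring
    _ ≤ κ ^ (n + 1) * (8 * 4 ^ n * (τ ^ (n + 1) * (P * a))) / (τ ^ (n + 1) * P) := by gcongr
    _ = _ := by field_simp

theorem prod_mul_scale_le (ha : 0 < a) (hb : 0 < b) (hε : 0 < ε) (hε1 : ε ≤ 1)
    (hτ : 0 < τ) (hP₀ : 0 < P) (hκ : 0 < κ) (hP : ε * (P * a) ≤ C₁ * τ) :
    ε ^ (n + 2) * (P * (κ * (a * b) / (ε * τ))) ≤ κ * C₁ * b :=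
  calc _ = ε ^ n * (κ * b * (ε * (P * a)) / τ) := by field_simp; ring
    _ ≤ 1 * (κ * b * (C₁ * τ) / τ) := by
        gcongr
        exact pow_le_one₀ hε.le hε1
    _ = _ := by field_simp

theorem cell_count_le {k : ℝ} (hε : 0 < ε) (hε1 : ε ≤ 1) (hk : 0 ≤ k) :
    (5 * ((1 + 2 * n) * (1 + k / ε ^ (2 * n + 2))) ^ 2 / ε ^ 2) ^ (2 * n + 1) ≤
      (5 * ((1 + 2 * n) * (1 + k)) ^ 2) ^ (2 * n + 1) / ε ^ ((4 * n + 6) * (2 * n + 1)) := by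
  have side_le : 1 + k / ε ^ (2 * n + 2) ≤ (1 + k) / ε ^ (2 * n + 2) := by
    rw [add_div]
    exact add_le_add_left (one_le_one_div (by positivity) (pow_le_one₀ hε.le hε1)) _
  rw [pow_mul, ← div_pow]
  refine pow_le_pow_left₀ (by positivity) ?_ _
  calc _ ≤ 5 * ((1 + 2 * n) * ((1 + k) / ε ^ (2 * n + 2))) ^ 2 / ε ^ 2 := by gcongr
    _ = _ := by
      field_simp
      ring

end Scales

section ExistsBall

variable {V : Type*} [NormedAddCommGroup V] [InnerProductSpace ℝ V] [FiniteDimensional ℝ V]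
  [MeasurableSpace V] [BorelSpace V] {E Es : Set (V × ℝ)} {G : Set ((V × ℝ) × V)} {n : ℕ}
  {a b τ : ℝ}

theorem IncidenceFrame.exists_le_mul_volume_inter_bilinearBall (𝔉 : IncidenceFrame V n)
    {ω T δ H l : ℝ} (hG : MeasurableSet G) (hGE : ∀ z ∈ G, z.1 ∈ E)
    (hGEs : ∀ z ∈ G, (incidenceSwap z).1 ∈ Es) (ha : 0 < a) (hb : 0 < b) (hτ : 0 < τ)
    (hEa : volume E ≤ ENNReal.ofReal a) (hEsb : volume Es ≤ ENNReal.ofReal b) (hT : 0 < T)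
    (hδ : 0 < δ) (hl : 0 < l) (hl1 : l ≤ 1) (hTω : n * 2 ^ n * (∏ i, 𝔉.s i) * a ≤ ω * T)
    (hδω : 4 * (4 * T) ^ n * δ ≤ ω)
    (hH : n * 2 ^ n * T ^ n / (δ / 2 * τ / (2 * b) * ∏ i, 𝔉.s i) ≤ H)
    (hfan : ENNReal.ofReal ω ≤ volume (𝔉.fan G (ENNReal.ofReal (τ / (4 * a))))) (j : Fin n) :
    ∃ z₀ : (V × ℝ) × V, ENNReal.ofReal (δ * τ / 4) ≤
      ENNReal.ofReal ((5 * ((1 + 2 * n) * (1 + H)) ^ 2 / l ^ 2) ^ (2 * n + 1)) *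
        volume (G ∩ bilinearBall z₀ 𝔉.e (fun j ↦ l * (T / 𝔉.s j)) (fun j ↦ l * 𝔉.s j)
          (l ^ 2 * T)) := by
  have mass_pos : 0 < δ / 2 * τ := by positivity
  have prod_pos := 𝔉.prod_s_pos
  obtain ⟨G', G'_subset, volume_G', snd_mem⟩ := 𝔉.exists_refinement_snd_mem_coordBox hT
    (hG.inter (measurable_fst (𝔉.measurableSet_xBox T))) (fun z hz ↦ hGEs z hz.1) hb mass_pos
    hEsb (fun z hz ↦ hz.2)
    (𝔉.ofReal_le_volume_inter_preimage_xBox hG hGE ha hτ hEa hT hδ hTω hδω hfan j)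
  obtain ⟨z₀, volume_le⟩ := 𝔉.exists_volume_le_mul_volume_inter_bilinearBall hT
    (hH.trans' (by positivity)) hl hl1 (volume_G'.trans_lt' (by simpa)).ne'
    (fun z hz ↦ (G'_subset hz).2) fun z hz ↦
      coordBox_mono (fun i ↦ mul_le_mul_of_nonneg_right hH (𝔉.s_pos i).le) (snd_mem z hz)
  refine ⟨z₀, (ENNReal.ofReal_le_ofReal (by linarith)).trans (volume_G'.trans (volume_le.trans
    (mul_le_mul_right (measure_mono (Set.inter_subset_inter_left _ fun z hz ↦
      (G'_subset hz).1)) _)))⟩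

theorem ofReal_le_of_ofReal_le_ofReal_mul {x y z : ℝ} {w : ℝ≥0∞} (hy : 0 < y) (h : z * y ≤ x)
    (hx : ENNReal.ofReal x ≤ ENNReal.ofReal y * w) : ENNReal.ofReal z ≤ w := by
  rw [← ENNReal.mul_le_mul_iff_right (ENNReal.ofReal_pos.mpr hy).ne' ENNReal.ofReal_ne_top,
    ← ENNReal.ofReal_mul hy.le, mul_comm]
  exact (ENNReal.ofReal_le_ofReal h).trans hx

theorem IncidenceFrame.exists_bilinearBall_const (hn : 0 < n) {C₁ : ℝ} (hC₁ : 0 < C₁) :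
    ∃ C : ℝ, 0 < C ∧ ∀ (𝔉 : IncidenceFrame V n) (E Es : Set (V × ℝ)) (G : Set ((V × ℝ) × V))
      (ε a b τ : ℝ), MeasurableSet G → (∀ z ∈ G, z.1 ∈ E) → (∀ z ∈ G, (incidenceSwap z).1 ∈ Es) →
      0 < ε → ε ≤ 1 → 0 < a → 0 < b → 0 < τ →
      volume E ≤ ENNReal.ofReal a → volume Es ≤ ENNReal.ofReal b →
      ENNReal.ofReal (τ ^ 2 / (2 ^ (n + 5) * (a * b))) ≤
        volume (𝔉.fan G (ENNReal.ofReal (τ / (4 * a)))) →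
      ε * ((∏ i, 𝔉.s i) * a) ≤ C₁ * τ →
      ε * (a * b) ^ (n + 1) ≤ 8 * 4 ^ n * (τ ^ (n + 1) * ((∏ i, 𝔉.s i) * a)) →
      ε * (a * b) ^ (n + 1) ≤ τ ^ (n + 2) →
      ∃ (z₀ : (V × ℝ) × V) (T : ℝ), 0 < T ∧
        ENNReal.ofReal (C⁻¹ * ε ^ (n + 1 + (4 * n + 6) * (2 * n + 1)) * τ) ≤
          volume (G ∩ bilinearBall z₀ 𝔉.e (fun j ↦ ε * (T / 𝔉.s j)) (fun j ↦ ε * 𝔉.s j)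
            (ε ^ 2 * T)) ∧
        ε ^ (n + 2) * (T ^ (n + 1) / ∏ i, 𝔉.s i) ≤ C * a ∧
        ε ^ (n + 2) * ((∏ i, 𝔉.s i) * T) ≤ C * b := by
  set κ : ℝ := n * 2 ^ (2 * n + 5) * C₁
  set μ : ℝ := 2 ^ (n + 5) * 4 ^ (n + 1) * κ ^ n
  set k : ℝ := n * 2 ^ (n + 2) * μ * κ ^ n * (8 * 4 ^ n)
  set N : ℝ := (5 * ((1 + 2 * n) * (1 + k)) ^ 2) ^ (2 * n + 1)
  have κ_pos : 0 < κ := by positivity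
  have N_pos : 0 < N := by positivity
  refine ⟨max (4 * μ * N) (max (8 * 4 ^ n * κ ^ (n + 1)) (κ * C₁)), by positivity, ?_⟩
  intro 𝔉 E Es G ε a b τ hG hGE hGEs hε hε1 ha hb hτ hEa hEsb fan_ge upper lower hετ
  have prod_pos := 𝔉.prod_s_pos
  have T_pos : 0 < κ * (a * b) / (ε * τ) := by positivity
  obtain ⟨z₀, volume_ge⟩ := 𝔉.exists_le_mul_volume_inter_bilinearBall hG hGE hGEs ha hb hτ hEa
    hEsb T_pos (δ := ε ^ (n + 1) / μ) (by positivity) hε hε1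
    (prod_mul_le_mul_scale ha hb hε hτ upper) (four_mul_scale_pow_mul_le ha hb hε hτ κ_pos hετ)
    (dual_side_le ha hε hτ prod_pos κ_pos (by positivity) lower) fan_ge ⟨0, hn⟩
  refine ⟨z₀, κ * (a * b) / (ε * τ), T_pos, ofReal_le_of_ofReal_le_ofReal_mul (by positivity) ?_
    volume_ge, (scale_pow_succ_div_prod_le ha hε hτ prod_pos κ_pos lower).trans ?_,
    (prod_mul_scale_le ha hb hε hε1 hτ prod_pos κ_pos upper).trans ?_⟩
  · calc _ ≤ (4 * μ * N)⁻¹ * ε ^ (n + 1 + (4 * n + 6) * (2 * n + 1)) * τ *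
          (N / ε ^ ((4 * n + 6) * (2 * n + 1))) := by
          gcongr
          · exact le_max_left _ _
          · exact cell_count_le hε hε1 (by positivity)
      _ = ε ^ (n + 1) / μ * τ / 4 := by
          rw [pow_add]
          field_simp
  · exact mul_le_mul_of_nonneg_right ((le_max_left _ _).trans (le_max_right _ _)) ha.le
  · exact mul_le_mul_of_nonneg_right ((le_max_right _ _).trans (le_max_right _ _)) hb.le

theorem exists_bilinearBall_volume_inter_ge (hn : 0 < n) (b₀ : OrthonormalBasis (Fin n) ℝ V) :
    ∃ C : ℝ, 0 < C ∧ ∃ A : ℕ, 0 < A ∧ ∀ (E Es : Set (V × ℝ)) (G : Set ((V × ℝ) × V))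
      (ε a b τ : ℝ), MeasurableSet Es → MeasurableSet G → volume G ≠ ⊤ → (∀ z ∈ G, z.1 ∈ E) →
      (∀ z ∈ G, (incidenceSwap z).1 ∈ Es) → 0 < ε → ε ≤ 1 → 0 < a → 0 < b → 0 < τ →
      volume E ≤ ENNReal.ofReal a → volume Es ≤ ENNReal.ofReal b →
      ENNReal.ofReal τ ≤ volume G → ε * (a * b) ^ (n + 1) ≤ τ ^ (n + 2) →
      ∃ (z₀ : (V × ℝ) × V) (e : OrthonormalBasis (Fin n) ℝ V) (r rs : Fin n → ℝ) (ρ : ℝ),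
        0 < ρ ∧ (∀ j, 0 < r j) ∧ (∀ j, 0 < rs j) ∧ (∀ j, r j * rs j = ρ) ∧
        ENNReal.ofReal (C⁻¹ * ε ^ A * τ) ≤ volume (G ∩ bilinearBall z₀ e r rs ρ) ∧
        (∏ j, r j) * ρ ≤ C * a ∧ (∏ j, rs j) * ρ ≤ C * b := by
  have const_pos : (0 : ℝ) < 2 ^ n ^ 2 * 4 * 8 ^ n := by positivity
  obtain ⟨C, C_pos, exists_ball⟩ :=
    IncidenceFrame.exists_bilinearBall_const (V := V) hn const_pos
  refine ⟨C, C_pos, n + 1 + (4 * n + 6) * (2 * n + 1), by positivity, ?_⟩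
  intro E Es G ε a b τ hEs hG hGtop hGE hGEs hε hε1 ha hb hτ hEa hEsb hGτ hετ
  obtain ⟨𝔉, fan_ge, prod_ge, prod_le⟩ :=
    exists_incidenceFrame b₀ hEs hG hGtop hGE hGEs ha hb hτ hEa hEsb hGτ
  obtain ⟨z₀, T, T_pos, volume_ge, prod_r_le, prod_rs_le⟩ :=
    exists_ball 𝔉 E Es G ε a b τ hG hGE hGEs hε hε1 ha hb hτ hEa hEsb fan_ge
      (eps_mul_prod_mul_le ha hε const_pos hτ prod_le hετ)
      (eps_mul_pow_le_prod_mul hτ (by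
        rw [div_le_iff₀ (by positivity)] at prod_ge
        linarith) hετ) hετ
  refine ⟨z₀, 𝔉.e, _, _, ε ^ 2 * T, by positivity,
    fun j ↦ mul_pos hε (div_pos T_pos (𝔉.s_pos j)), fun j ↦ mul_pos hε (𝔉.s_pos j), fun j ↦ ?_,
    volume_ge, (le_of_eq ?_).trans prod_r_le, (le_of_eq ?_).trans prod_rs_le⟩
  · have := (𝔉.s_pos j).ne'
    field_simp
  · simp only [Finset.prod_mul_distrib, Finset.prod_div_distrib, Finset.prod_const,
      Finset.card_univ, Fintype.card_fin]
    ring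
  · simp only [Finset.prod_mul_distrib, Finset.prod_const, Finset.card_univ, Fintype.card_fin]
    ring

end ExistsBall

section Incidence

variable {n : ℕ}

/-- The shear `(x', u) ↦ (x', u + |x'|²)` from the coordinates in which the paraboloids of `T₀` are
hyperplanes to the original ones, for points on the `E` side of the incidence relation. -/
def liftFst (p : Pt n) : Pt n := (p.1, p.2 + ‖p.1‖ ^ 2)

/-- The counterpart `(y', v) ↦ (y', -v - |y'|²)` of `liftFst` for points on the `E*` side of the
incidence relation; the sign of `v` makes the relation symmetric in the two sides. -/
def liftSnd (p : Pt n) : Pt n := (p.1, -p.2 - ‖p.1‖ ^ 2)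

theorem measurePreserving_liftFst : MeasurePreserving (liftFst (n := n)) volume volume := by
  have measurable_neg_sq : Measurable fun x : Vec n ↦ -‖x‖ ^ 2 := by fun_prop
  have shear_eq : (fun p : Pt n ↦ (p.1, p.2 - -‖p.1‖ ^ 2)) = liftFst := by
    simp only [sub_neg_eq_add]
    rfl
  exact shear_eq ▸ measurePreserving_shear measurable_neg_sq

theorem measurePreserving_liftSnd : MeasurePreserving (liftSnd (n := n)) volume volume :=
  have measurable_sq : Measurable fun x : Vec n ↦ ‖x‖ ^ 2 := by fun_prop
  (measurePreserving_shear measurable_sq).comp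
    ((MeasurePreserving.id _).prod (Measure.measurePreserving_neg _))

/-- The parametrization of the incidence manifold `ℐ` by the coordinates `((x', u), y')` of
`liftFst` and `liftSnd`. -/
def incidencePair (z : Pt n × Vec n) : Pt n × Pt n := (liftFst z.1, liftSnd (incidenceSwap z).1)

theorem snd_incidencePair (z : Pt n × Vec n) :
    (incidencePair z).2 = (z.2, (liftFst z.1).2 - ‖z.1.1 - z.2‖ ^ 2) := by
  simp only [incidencePair, liftSnd, incidenceSwap, liftFst, norm_sub_sq_real]
  ring_nf

theorem incident_incidencePair (z : Pt n × Vec n) : (incidencePair z).2.2 =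
    (incidencePair z).1.2 - ‖(incidencePair z).2.1 - (incidencePair z).1.1‖ ^ 2 := by
  rw [snd_incidencePair, norm_sub_rev]
  rfl

theorem incidencePair_mem_ballI_iff {z z₀ : Pt n × Vec n} {e : Fin n → Vec n} {r rs : Fin n → ℝ}
    {ρ : ℝ} :
    incidencePair z ∈ ballI n (incidencePair z₀) e r rs ρ ↔ z ∈ bilinearBall z₀ e r rs ρ := by
  have fst_eq : (incidencePair z).1.2 - (incidencePair z₀).2.2
      - ‖(incidencePair z).1.1 - (incidencePair z₀).2.1‖ ^ 2 =
        z.1.2 - z₀.1.2 + 2 * ⟪z.1.1 - z₀.1.1, z₀.2⟫ := by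
    simp only [incidencePair, liftFst, liftSnd, incidenceSwap, norm_sub_sq_real, inner_sub_left]
    ring
  have snd_eq : (incidencePair z).2.2 - (incidencePair z₀).1.2
      + ‖(incidencePair z).2.1 - (incidencePair z₀).1.1‖ ^ 2 =
        z.1.2 - z₀.1.2 + 2 * ⟪z.1.1 - z₀.1.1, z.2⟫ := by
    simp only [incidencePair, liftFst, liftSnd, incidenceSwap, norm_sub_sq_real, inner_sub_left,
      real_inner_comm z₀.1.1]
    ring
  change (_ ∧ _ ∧ |_| < ρ ∧ _ ∧ |_| < ρ) ↔ _
  rw [fst_eq, snd_eq]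
  constructor
  · rintro ⟨-, hx, hu, hy, hv⟩
    exact ⟨hx, hy, hu, hv⟩
  · rintro ⟨hx, hy, hu, hv⟩
    exact ⟨incident_incidencePair z, hx, hu, hy, hv⟩

/-- The set of incidences between `E` and `E*` at distance `|x' - y'| ≤ 1`, in the coordinates of
`incidencePair`; its volume is `⟨T₀(χ_{E*}), χ_E⟩`. -/
def incidenceSet (E Es : Set (Pt n)) : Set (Pt n × Vec n) :=
  {z | incidencePair z ∈ E ×ˢ Es ∧ ‖z.1.1 - z.2‖ ≤ 1}

variable {E Es : Set (Pt n)}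

theorem measurableSet_incidenceSet (hE : MeasurableSet E) (hEs : MeasurableSet Es) :
    MeasurableSet (incidenceSet E Es) := by
  have measurable_pair : Measurable (incidencePair (n := n)) :=
    (measurePreserving_liftFst.measurable.comp measurable_fst).prodMk
      (measurePreserving_liftSnd.measurable.comp
        (measurable_fst.comp measurePreserving_incidenceSwap.measurable))
  exact (measurable_pair (hE.prod hEs)).inter
    (measurableSet_le (f := fun z : Pt n × Vec n ↦ ‖z.1.1 - z.2‖) (by fun_prop) measurable_const)

theorem radonT0_indicator (hEs : MeasurableSet Es) (x : Pt n) :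
    radonT0 n (Es.indicator 1) x =
      volume {y : Vec n | (y, x.2 - ‖x.1 - y‖ ^ 2) ∈ Es ∧ ‖x.1 - y‖ ≤ 1} := by
  set S : Set (Vec n) := {t | (x.1 - t, x.2 - ‖t‖ ^ 2) ∈ Es}
  have measurableSet_S : MeasurableSet S :=
    (show Measurable fun t : Vec n ↦ (x.1 - t, x.2 - ‖t‖ ^ 2) by fun_prop) hEs
  calc radonT0 n (Es.indicator 1) x
      = ∫⁻ t in Metric.closedBall 0 1, S.indicator 1 t := rfl
    _ = volume (S ∩ Metric.closedBall 0 1) := by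
      rw [lintegral_indicator_one measurableSet_S, Measure.restrict_apply measurableSet_S]
    _ = volume ((x.1 - ·) ⁻¹' (S ∩ Metric.closedBall 0 1)) :=
      ((Measure.measurePreserving_sub_left volume x.1).measure_preimage
        (measurableSet_S.inter measurableSet_closedBall).nullMeasurableSet).symm
    _ = _ := by
      congr 1
      ext y
      simp [S]

theorem incT0_eq_volume_incidenceSet (hE : MeasurableSet E) (hEs : MeasurableSet Es) :
    incT0 n E Es = volume (incidenceSet E Es) := by
  set S : Set (Pt n × Vec n) :=
    {z | (z.2, z.1.2 - ‖z.1.1 - z.2‖ ^ 2) ∈ Es ∧ ‖z.1.1 - z.2‖ ≤ 1}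
  have measurableSet_S : MeasurableSet S :=
    ((show Measurable fun z : Pt n × Vec n ↦ (z.2, z.1.2 - ‖z.1.1 - z.2‖ ^ 2) by fun_prop)
      hEs).inter (measurableSet_le (f := fun z : Pt n × Vec n ↦ ‖z.1.1 - z.2‖) (by fun_prop)
        measurable_const)
  have measurePreserving_lift : MeasurePreserving (Prod.map liftFst id : Pt n × Vec n → _) :=
    measurePreserving_liftFst.prod (MeasurePreserving.id volume)
  calc incT0 n E Es = ∫⁻ x in E, volume (Prod.mk x ⁻¹' S) :=
        lintegral_congr fun x ↦ radonT0_indicator hEs x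
    _ = volume (S ∩ E ×ˢ Set.univ) := by
        rw [← Measure.prod_apply measurableSet_S, Measure.restrict_prod_eq_prod_univ,
          Measure.restrict_apply measurableSet_S]
        rfl
    _ = volume (Prod.map liftFst id ⁻¹' (S ∩ E ×ˢ Set.univ)) :=
        (measurePreserving_lift.measure_preimage
          (measurableSet_S.inter (hE.prod MeasurableSet.univ)).nullMeasurableSet).symm
    _ = volume (incidenceSet E Es) := by
        congr 1
        ext z
        change (_ ∧ _) ∧ _ ∧ _ ↔ (_ ∧ (incidencePair z).2 ∈ Es) ∧ _
        rw [snd_incidencePair]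
        tauto

end Incidence

section Projections

variable {n : ℕ} {zb : Pt n × Pt n} {e : Fin n → Vec n} {r rs : Fin n → ℝ} {ρ : ℝ}

theorem isOpen_image_fst_incident {O : Set (Pt n × Pt n)} (hO : IsOpen O) :
    IsOpen (Prod.fst '' ({z | z.2.2 = z.1.2 - ‖z.2.1 - z.1.1‖ ^ 2} ∩ O)) := by
  have isOpen_preimage : IsOpen {w : Pt n × Vec n | (w.1, (w.2, w.1.2 - ‖w.2 - w.1.1‖ ^ 2)) ∈ O} :=
    hO.preimage (by fun_prop)
  convert isOpenMap_fst _ isOpen_preimage using 1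
  ext x
  constructor
  · rintro ⟨⟨x, y', y_d⟩, ⟨hinc, hz⟩, rfl⟩
    obtain rfl : y_d = x.2 - ‖y' - x.1‖ ^ 2 := hinc
    exact ⟨(x, y'), hz, rfl⟩
  · rintro ⟨⟨x, y'⟩, hz, rfl⟩
    exact ⟨_, ⟨rfl, hz⟩, rfl⟩

theorem isOpen_image_snd_incident {O : Set (Pt n × Pt n)} (hO : IsOpen O) :
    IsOpen (Prod.snd '' ({z | z.2.2 = z.1.2 - ‖z.2.1 - z.1.1‖ ^ 2} ∩ O)) := by
  have isOpen_preimage : IsOpen {w : Pt n × Vec n | ((w.2, w.1.2 + ‖w.1.1 - w.2‖ ^ 2), w.1) ∈ O} :=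
    hO.preimage (by fun_prop)
  convert isOpenMap_fst _ isOpen_preimage using 1
  ext y
  constructor
  · rintro ⟨⟨⟨x', x_d⟩, y⟩, ⟨hinc : y.2 = _, hz⟩, rfl⟩
    obtain rfl : x_d = y.2 + ‖y.1 - x'‖ ^ 2 := by linarith
    exact ⟨(y, x'), hz, rfl⟩
  · rintro ⟨⟨y, x'⟩, hz, rfl⟩
    exact ⟨_, ⟨(add_sub_cancel_right _ _).symm, hz⟩, rfl⟩

theorem exists_isOpen_ballI_eq_inter : ∃ O : Set (Pt n × Pt n), IsOpen O ∧
    ballI n zb e r rs ρ = {z | z.2.2 = z.1.2 - ‖z.2.1 - z.1.1‖ ^ 2} ∩ O := by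
  refine ⟨{z | (∀ j, |⟪z.1.1 - zb.1.1, e j⟫| < r j) ∧
    |z.1.2 - zb.2.2 - ‖z.1.1 - zb.2.1‖ ^ 2| < ρ ∧ (∀ j, |⟪z.2.1 - zb.2.1, e j⟫| < rs j) ∧
    |z.2.2 - zb.1.2 + ‖z.2.1 - zb.1.1‖ ^ 2| < ρ}, ?_, rfl⟩
  simp only [Set.ofPred_and, Set.ofPred_forall]
  refine (isOpen_iInter_of_finite fun j ↦ ?_).inter (IsOpen.inter ?_
    ((isOpen_iInter_of_finite fun j ↦ ?_).inter ?_)) <;>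
  exact isOpen_lt (by fun_prop) continuous_const

theorem isOpen_image_fst_ballI : IsOpen (Prod.fst '' ballI n zb e r rs ρ) := by
  obtain ⟨O, hO, ballI_eq⟩ := exists_isOpen_ballI_eq_inter
  exact ballI_eq ▸ isOpen_image_fst_incident hO

theorem isOpen_image_snd_ballI : IsOpen (Prod.snd '' ballI n zb e r rs ρ) := by
  obtain ⟨O, hO, ballI_eq⟩ := exists_isOpen_ballI_eq_inter
  exact ballI_eq ▸ isOpen_image_snd_incident hO

theorem volume_image_fst_ballI_le (e : OrthonormalBasis (Fin n) ℝ (Vec n)) (hr : ∀ j, 0 ≤ r j) :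
    volume (Prod.fst '' ballI n zb e r rs ρ) ≤ ENNReal.ofReal (2 ^ (n + 1) * ((∏ j, r j) * ρ)) := by
  have measurable_paraboloid : Measurable fun x : Vec n ↦ zb.2.2 + ‖x - zb.2.1‖ ^ 2 := by fun_prop
  have image_subset : Prod.fst '' ballI n zb e r rs ρ ⊆
      shearedBox e zb.1.1 r (fun x ↦ zb.2.2 + ‖x - zb.2.1‖ ^ 2) ρ := by
    rintro _ ⟨z, ⟨-, hr, hρ, -⟩, rfl⟩
    exact ⟨fun j ↦ (hr j).le, by simpa only [sub_add_eq_sub_sub] using hρ.le⟩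
  simpa only [Fintype.card_fin] using
    (measure_mono image_subset).trans_eq (volume_shearedBox measurable_paraboloid hr)

theorem volume_image_snd_ballI_le (e : OrthonormalBasis (Fin n) ℝ (Vec n)) (hrs : ∀ j, 0 ≤ rs j) :
    volume (Prod.snd '' ballI n zb e r rs ρ) ≤
      ENNReal.ofReal (2 ^ (n + 1) * ((∏ j, rs j) * ρ)) := by
  have measurable_paraboloid : Measurable fun x : Vec n ↦ zb.1.2 - ‖x - zb.1.1‖ ^ 2 := by fun_prop
  have image_subset : Prod.snd '' ballI n zb e r rs ρ ⊆
      shearedBox e zb.2.1 rs (fun y ↦ zb.1.2 - ‖y - zb.1.1‖ ^ 2) ρ := by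
    rintro _ ⟨z, ⟨-, -, -, hrs, hρ⟩, rfl⟩
    exact ⟨fun j ↦ (hrs j).le, by simpa only [sub_sub_eq_add_sub, sub_add_eq_add_sub] using hρ.le⟩
  simpa only [Fintype.card_fin] using
    (measure_mono image_subset).trans_eq (volume_shearedBox measurable_paraboloid hrs)

end Projections

section Quasiextremal

variable {n : ℕ}

theorem incT0_le_volume_closedBall_mul (E Es : Set (Pt n)) :
    incT0 n E Es ≤ volume (Metric.closedBall (0 : Vec n) 1) * volume E := by
  have radonT0_le (x : Pt n) :
      radonT0 n (Es.indicator 1) x ≤ volume (Metric.closedBall (0 : Vec n) 1) :=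
    (lintegral_mono fun t ↦ Set.indicator_le_self' (fun _ _ ↦ zero_le) _).trans_eq (by simp)
  exact (lintegral_mono fun x ↦ radonT0_le x).trans_eq (setLIntegral_const _ _)

theorem volume_incidenceSet_inter_bilinearBall_le {E Es : Set (Pt n)} (hE : MeasurableSet E)
    (hEs : MeasurableSet Es) (z₀ : Pt n × Vec n) (e : Fin n → Vec n) (r rs : Fin n → ℝ) (ρ : ℝ) :
    volume (incidenceSet E Es ∩ bilinearBall z₀ e r rs ρ) ≤
      incT0 n (E ∩ Prod.fst '' ballI n (incidencePair z₀) e r rs ρ)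
        (Es ∩ Prod.snd '' ballI n (incidencePair z₀) e r rs ρ) := by
  rw [incT0_eq_volume_incidenceSet (hE.inter isOpen_image_fst_ballI.measurableSet)
    (hEs.inter isOpen_image_snd_ballI.measurableSet)]
  refine measure_mono fun z ⟨⟨⟨hzE, hzEs⟩, dist_le⟩, hz⟩ ↦ ?_
  have pair_mem := incidencePair_mem_ballI_iff.2 hz
  exact ⟨⟨⟨hzE, _, pair_mem, rfl⟩, hzEs, _, pair_mem, rfl⟩, dist_le⟩

theorem ofReal_mul_le_ofReal_mul_mul {k c x : ℝ} {v : ℝ≥0∞} (hk : 0 ≤ k) (hc : 0 ≤ c)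
    (hv : v ≠ ⊤) (hx : x ≤ c * v.toReal) :
    ENNReal.ofReal (k * x) ≤ ENNReal.ofReal (k * c) * v := by
  rw [← ofReal_toReal hv, ← ofReal_mul (mul_nonneg hk hc), mul_assoc]
  gcongr

/-- Quasiextremality takes the form `ε (|E| |E*|)^d ≤ ⟨T₀(χ_{E*}), χ_E⟩^{d+1}`, the reverse, up to
`ε`, of the restricted weak-type bound for `T₀`. -/
theorem exists_ballI_incT0_ge (hn : 0 < n) :
    ∃ C : ℝ, 0 < C ∧ ∃ A : ℕ, 0 < A ∧ ∀ (E Es : Set (Pt n)) (ε : ℝ),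
      MeasurableSet E → MeasurableSet Es → 0 < volume E → volume E < ⊤ → 0 < volume Es →
      volume Es < ⊤ → 0 < ε → ε ≤ 1 →
      ENNReal.ofReal ε * (volume E * volume Es) ^ (n + 1) ≤ incT0 n E Es ^ (n + 2) →
      ∃ (zb : Pt n × Pt n) (e : Fin n → Vec n) (r rs : Fin n → ℝ) (ρ : ℝ),
        IsBallParams n zb e r rs ρ ∧
        ENNReal.ofReal (C⁻¹ * ε ^ A) * incT0 n E Es ≤
          incT0 n (E ∩ Prod.fst '' ballI n zb e r rs ρ) (Es ∩ Prod.snd '' ballI n zb e r rs ρ) ∧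
        volume (Prod.fst '' ballI n zb e r rs ρ) ≤ ENNReal.ofReal C * volume E ∧
        volume (Prod.snd '' ballI n zb e r rs ρ) ≤ ENNReal.ofReal C * volume Es := by
  obtain ⟨C, C_pos, A, A_pos, exists_ball⟩ :=
    exists_bilinearBall_volume_inter_ge hn (EuclideanSpace.basisFun (Fin n) ℝ)
  refine ⟨2 ^ (n + 1) * C, by positivity, A, A_pos, ?_⟩
  intro E Es ε hE hEs E_pos E_lt Es_pos Es_lt hε hε1 hquasi
  have inc_lt := (incT0_le_volume_closedBall_mul E Es).trans_lt
    (mul_lt_top measure_closedBall_lt_top E_lt)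
  have hquasi_real := ENNReal.toReal_mono (ENNReal.pow_ne_top inc_lt.ne) hquasi
  simp only [toReal_mul, toReal_pow, toReal_ofReal hε.le] at hquasi_real
  have inc_ne_zero : incT0 n E Es ≠ 0 :=
    (pow_ne_zero_iff (n + 1).succ_ne_zero).1 (hquasi.trans_lt' (by positivity)).ne'
  obtain ⟨z₀, e, r, rs, ρ, ρ_pos, r_pos, rs_pos, mul_eq, inter_ge, prod_r_le, prod_rs_le⟩ :=
    exists_ball (liftFst ⁻¹' E) (liftSnd ⁻¹' Es) (incidenceSet E Es) ε (volume E).toReal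
      (volume Es).toReal (incT0 n E Es).toReal (measurePreserving_liftSnd.measurable hEs)
      (measurableSet_incidenceSet hE hEs) (incT0_eq_volume_incidenceSet hE hEs ▸ inc_lt.ne)
      (fun z hz ↦ hz.1.1) (fun z hz ↦ hz.1.2) hε hε1 (toReal_pos E_pos.ne' E_lt.ne)
      (toReal_pos Es_pos.ne' Es_lt.ne) (toReal_pos inc_ne_zero inc_lt.ne)
      (by rw [measurePreserving_liftFst.measure_preimage hE.nullMeasurableSet,
        ofReal_toReal E_lt.ne])
      (by rw [measurePreserving_liftSnd.measure_preimage hEs.nullMeasurableSet,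
        ofReal_toReal Es_lt.ne])
      (by rw [ofReal_toReal inc_lt.ne, incT0_eq_volume_incidenceSet hE hEs]) hquasi_real
  refine ⟨incidencePair z₀, e, r, rs, ρ, ⟨incident_incidencePair z₀, ρ_pos, e.orthonormal, r_pos,
    rs_pos, mul_eq⟩, ?_, ?_, ?_⟩
  · refine le_trans ?_ (inter_ge.trans (volume_incidenceSet_inter_bilinearBall_le hE hEs ..))
    rw [ofReal_mul (by positivity) (q := (incT0 n E Es).toReal), ofReal_toReal inc_lt.ne]
    gcongr
    exact le_mul_of_one_le_left C_pos.le (one_le_pow₀ one_le_two)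
  · exact (volume_image_fst_ballI_le e fun j ↦ (r_pos j).le).trans
      (ofReal_mul_le_ofReal_mul_mul (by positivity) (by positivity) E_lt.ne prod_r_le)
  · exact (volume_image_snd_ballI_le e fun j ↦ (rs_pos j).le).trans
      (ofReal_mul_le_ofReal_mul_mul (by positivity) (by positivity) Es_lt.ne prod_rs_le)

end Quasiextremal

section Knapp

variable {n : ℕ}

theorem norm_sub_le_sum_of_mem_coordBox {ι V : Type*} [Fintype ι] [NormedAddCommGroup V]
    [InnerProductSpace ℝ V] {e : OrthonormalBasis ι ℝ V} {x₀ x : V} {s : ι → ℝ}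
    (hx : x ∈ coordBox e x₀ s) : ‖x - x₀‖ ≤ ∑ i, s i :=
  calc ‖x - x₀‖ = ‖∑ i, ⟪e i, x - x₀⟫ • e i‖ := by rw [e.sum_repr']
    _ ≤ ∑ i, ‖⟪e i, x - x₀⟫ • e i‖ := norm_sum_le _ _
    _ ≤ ∑ i, s i := Finset.sum_le_sum fun i _ ↦ by
      rw [norm_smul, e.norm_eq_one, mul_one, Real.norm_eq_abs, real_inner_comm]
      exact hx i

theorem shearedBox_prod_coordBox_subset_incidenceSet {e : OrthonormalBasis (Fin n) ℝ (Vec n)}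
    {r s : Fin n → ℝ} {K h : ℝ} (hrs : ∀ i, r i * s i ≤ K) (hK : 4 * n * K ≤ h)
    (hsum : ∑ i, r i + ∑ i, s i ≤ 1) :
    shearedBox e 0 r 0 (h / 2) ×ˢ coordBox e 0 s ⊆
      incidenceSet (shearedBox e 0 r (fun x ↦ ‖x‖ ^ 2) h)
        (shearedBox e 0 s (fun y ↦ -‖y‖ ^ 2) h) := by
  rintro ⟨⟨x, u⟩, y⟩ ⟨⟨hx : x ∈ coordBox e 0 r, hu : |u - 0| ≤ h / 2⟩, hy : y ∈ coordBox e 0 s⟩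
  have inner_le := abs_inner_sub_le_of_mem_coordBox hx hy hrs
  have norm_x_le := norm_sub_le_sum_of_mem_coordBox hx
  have norm_y_le := norm_sub_le_sum_of_mem_coordBox hy
  simp only [sub_zero, Fintype.card_fin] at hu inner_le norm_x_le norm_y_le
  rw [abs_le] at hu inner_le
  refine ⟨⟨⟨hx, ?_⟩, hy, ?_⟩, (norm_sub_le x y).trans (by linarith)⟩
  · change |u + ‖x‖ ^ 2 - ‖x‖ ^ 2| ≤ h
    rw [add_sub_cancel_right, abs_le]
    constructor <;> linarith
  · change |-(-(u + 2 * ⟪x, y⟫)) - ‖y‖ ^ 2 - -‖y‖ ^ 2| ≤ h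
    rw [neg_neg, sub_neg_eq_add, sub_add_cancel, abs_le]
    constructor <;> linarith

theorem incT0_le_Lam0 {E Es : Set (Pt n)} (hE : MeasurableSet E) (hEs : MeasurableSet Es) :
    incT0 n E Es ≤ Lam0 n (volume E) (volume Es) :=
  le_iSup₂_of_le E Es <| le_iSup₂_of_le hE hEs <| le_iSup₂_of_le rfl rfl le_rfl

theorem Lam0_lt_top {t : ℝ≥0∞} (ht : t < ⊤) (ts : ℝ≥0∞) : Lam0 n t ts < ⊤ := by
  have ball_lt_top : volume (Metric.closedBall (0 : Vec n) 1) < ⊤ := measure_closedBall_lt_top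
  refine lt_of_le_of_lt ?_ (mul_lt_top ball_lt_top ht)
  refine iSup₂_le fun E Es ↦ iSup₂_le fun _ _ ↦ iSup₂_le fun volume_E _ ↦ ?_
  exact volume_E ▸ incT0_le_volume_closedBall_mul E Es

theorem ofReal_le_Lam0 {R S h : ℝ} (hR : 0 ≤ R) (hS : 0 ≤ S) (hh : 0 ≤ h)
    (hRS : 4 * n * (R * S) ≤ h) (hsum : n * R + n * S ≤ 1) :
    ENNReal.ofReal (4 ^ n * (R ^ n * S ^ n * h)) ≤
      Lam0 n (ENNReal.ofReal (2 ^ (n + 1) * (R ^ n * h)))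
        (ENNReal.ofReal (2 ^ (n + 1) * (S ^ n * h))) := by
  set e := EuclideanSpace.basisFun (Fin n) ℝ
  have measurable_fst : Measurable fun x : Vec n ↦ ‖x‖ ^ 2 := by fun_prop
  have measurable_snd : Measurable fun y : Vec n ↦ -‖y‖ ^ 2 := by fun_prop
  have measurableSet_E :=
    measurableSet_shearedBox (e := e) (x₀ := 0) (s := fun _ ↦ R) (h := h) measurable_fst
  have measurableSet_Es :=
    measurableSet_shearedBox (e := e) (x₀ := 0) (s := fun _ ↦ S) (h := h) measurable_snd
  have volume_E := volume_shearedBox (e := e) (x₀ := 0) (h := h) measurable_fst fun _ ↦ hR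
  have volume_Es := volume_shearedBox (e := e) (x₀ := 0) (h := h) measurable_snd fun _ ↦ hS
  have volume_prod := congr_arg₂ (· * ·)
    (volume_shearedBox (e := e) (x₀ := 0) (h := h / 2) measurable_zero fun _ ↦ hR)
    (volume_coordBox e 0 fun _ ↦ S)
  simp only [Finset.prod_const, Finset.card_univ, Fintype.card_fin]
    at volume_E volume_Es volume_prod
  rw [← volume_E, ← volume_Es]
  refine le_trans ?_ (incT0_le_Lam0 measurableSet_E measurableSet_Es)
  rw [incT0_eq_volume_incidenceSet measurableSet_E measurableSet_Es]
  refine le_trans ?_ (measure_mono (shearedBox_prod_coordBox_subset_incidenceSet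
    (fun _ ↦ le_rfl) hRS (by simpa using hsum)))
  rw [Measure.volume_eq_prod, Measure.prod_prod, volume_prod, ← ofReal_pow (by positivity),
    ← ofReal_mul (by positivity)]
  refine le_of_eq (congr_arg _ ?_)
  rw [show (4 : ℝ) = 2 * 2 by norm_num, mul_pow 2 2, mul_pow 2 S]
  ring

theorem card_mul_le_half {R a h : ℝ} (hn : n ≠ 0) (hR : 0 ≤ R) (hh : 0 < h)
    (ha : 2 ^ (n + 1) * (R ^ n * h) = a) (hah : (2 * n) ^ n * a ≤ h) : n * R ≤ 1 / 2 := by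
  have pow_le : (2 * n * R) ^ n ≤ 1 := by
    refine le_of_mul_le_mul_right (le_trans ?_ (hah.trans_eq (one_mul h).symm)) hh
    calc (2 * n * R) ^ n * h = 1 * ((2 * n) ^ n * (R ^ n * h)) := by ring
      _ ≤ 2 ^ (n + 1) * ((2 * n) ^ n * (R ^ n * h)) := by
        gcongr
        exact one_le_pow₀ one_le_two
      _ = (2 * n) ^ n * a := by rw [← ha]; ring
  have := (pow_le_one_iff_of_nonneg (by positivity) hn).1 pow_le
  linarith

theorem four_mul_card_mul_le {R S a b h : ℝ} (hn : n ≠ 0) (hR : 0 ≤ R) (hS : 0 ≤ S) (hh : 0 < h)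
    (ha : 2 ^ (n + 1) * (R ^ n * h) = a) (hb : 2 ^ (n + 1) * (S ^ n * h) = b)
    (hab : (4 * n) ^ n * (a * b) ≤ h ^ (n + 2)) : 4 * n * (R * S) ≤ h := by
  refine le_of_pow_le_pow_left₀ hn hh.le (le_of_mul_le_mul_right ?_ (pow_pos hh 2))
  calc (4 * n * (R * S)) ^ n * h ^ 2 = 1 * ((4 * n) ^ n * (R ^ n * h * (S ^ n * h))) := by ring
    _ ≤ (2 ^ (n + 1) * 2 ^ (n + 1)) * ((4 * n) ^ n * (R ^ n * h * (S ^ n * h))) := by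
      gcongr
      exact one_le_mul_of_one_le_of_one_le (one_le_pow₀ one_le_two) (one_le_pow₀ one_le_two)
    _ = (4 * n) ^ n * (a * b) := by rw [← ha, ← hb]; ring
    _ ≤ h ^ n * h ^ 2 := hab.trans_eq (pow_add h n 2)

theorem mul_le_of_pow_eq_of_comparable {D K c a b h : ℝ} (hD : D ^ (n + 2) ≤ K * c) (hK : 0 ≤ K)
    (ha : 0 ≤ a) (hh : 0 ≤ h) (hab : c * a ^ (n + 1) ≤ b) (hpow : h ^ (n + 2) = K * (a * b)) :
    D * a ≤ h := by
  refine le_of_pow_le_pow_left₀ (n + 1).succ_ne_zero hh ?_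
  calc (D * a) ^ (n + 2) = D ^ (n + 2) * a ^ (n + 2) := mul_pow ..
    _ ≤ K * c * a ^ (n + 2) := by gcongr
    _ = K * (a * (c * a ^ (n + 1))) := by ring
    _ ≤ K * (a * b) := by gcongr
    _ = h ^ (n + 2) := hpow.symm

theorem exists_pos_pow_eq {k : ℕ} (hk : k ≠ 0) {x : ℝ} (hx : 0 < x) : ∃ y : ℝ, 0 < y ∧ y ^ k = x :=
  ⟨x ^ (k⁻¹ : ℝ), by positivity, Real.rpow_inv_natCast_pow hx.le hk⟩

-- Knapp example: this choice of `h` makes `R * S` comparable to `h`, the largest value for which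
-- the two boxes still interact almost fully.
theorem ofReal_div_le_Lam0_pow (hn : n ≠ 0) {K c a b : ℝ} (hK : (4 * n) ^ n ≤ K)
    (hKc : ((2 * n) ^ n) ^ (n + 2) ≤ K * c) (ha : 0 < a) (hb : 0 < b) (hab : c * a ^ (n + 1) ≤ b)
    (hba : c * b ^ (n + 1) ≤ a) :
    ENNReal.ofReal ((a * b) ^ (n + 1) / (4 ^ (n + 2) * K)) ≤
      Lam0 n (ENNReal.ofReal a) (ENNReal.ofReal b) ^ (n + 2) := by
  have K_pos : 0 < K := lt_of_lt_of_le (by positivity) hK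
  obtain ⟨h, hh, h_pow⟩ := exists_pos_pow_eq (n + 1).succ_ne_zero (x := K * (a * b)) (by positivity)
  obtain ⟨R, hR, R_pow⟩ := exists_pos_pow_eq hn (x := a / (2 ^ (n + 1) * h)) (by positivity)
  obtain ⟨S, hS, S_pow⟩ := exists_pos_pow_eq hn (x := b / (2 ^ (n + 1) * h)) (by positivity)
  have R_eq : 2 ^ (n + 1) * (R ^ n * h) = a := by
    rw [R_pow]
    field_simp
  have S_eq : 2 ^ (n + 1) * (S ^ n * h) = b := by
    rw [S_pow]
    field_simp
  have R_le := card_mul_le_half hn hR.le hh R_eq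
    (mul_le_of_pow_eq_of_comparable hKc K_pos.le ha.le hh.le hab h_pow)
  have S_le := card_mul_le_half hn hS.le hh S_eq
    (mul_le_of_pow_eq_of_comparable hKc K_pos.le hb.le hh.le hba (by rw [h_pow, mul_comm a]))
  have RS_le := four_mul_card_mul_le hn hR.le hS.le hh R_eq S_eq (h_pow ▸ by gcongr)
  have Lam0_ge := ofReal_le_Lam0 hR.le hS.le hh.le RS_le (by linarith)
  rw [R_eq, S_eq] at Lam0_ge
  refine (le_of_eq ?_).trans (pow_le_pow_left₀ zero_le Lam0_ge (n + 2))
  rw [← ofReal_pow (by positivity)]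
  congr 1
  have pairing_eq : 4 ^ n * (R ^ n * S ^ n * h) = a * b / (4 * h) := by
    rw [eq_div_iff_mul_eq (by positivity), ← R_eq, ← S_eq, show (4 : ℝ) = 2 * 2 by norm_num,
      mul_pow]
    ring
  rw [pairing_eq, div_pow, mul_pow 4 h, h_pow]
  field_simp
  ring

/-- Sharpness, up to constants, of the restricted weak-type bound
`⟨T₀(χ_{E*}), χ_E⟩ ≲ (|E| |E*|)^{d/(d+1)}` at all pairs of comparable measures. -/
theorem exists_mul_pow_le_Lam0_pow (hn : n ≠ 0) {c : ℝ} (hc : 0 < c) :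
    ∃ c' : ℝ, 0 < c' ∧ c' ≤ 1 ∧ ∀ t ts : ℝ≥0∞, 0 < t → t < ⊤ → 0 < ts → ts < ⊤ →
      ENNReal.ofReal c * ts ^ (n + 1) ≤ t → ENNReal.ofReal c * t ^ (n + 1) ≤ ts →
      ENNReal.ofReal c' * (t * ts) ^ (n + 1) ≤ Lam0 n t ts ^ (n + 2) := by
  set K : ℝ := max 1 (max ((4 * n) ^ n) (((2 * n) ^ n) ^ (n + 2) / c))
  have one_le_K : 1 ≤ K := le_max_left _ _
  refine ⟨(4 ^ (n + 2) * K)⁻¹, by positivity, inv_le_one_of_one_le₀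
    (one_le_mul_of_one_le_of_one_le (one_le_pow₀ (by norm_num)) one_le_K), ?_⟩
  intro t ts t_pos t_lt ts_pos ts_lt hts ht
  have ht_real := ENNReal.toReal_mono ts_lt.ne ht
  have hts_real := ENNReal.toReal_mono t_lt.ne hts
  simp only [toReal_mul, toReal_pow, toReal_ofReal hc.le] at ht_real hts_real
  have Lam0_ge := ofReal_div_le_Lam0_pow hn ((le_max_left _ _).trans (le_max_right 1 _))
    ((div_le_iff₀ hc).1 ((le_max_right _ _).trans (le_max_right 1 _)))
    (toReal_pos t_pos.ne' t_lt.ne) (toReal_pos ts_pos.ne' ts_lt.ne) ht_real hts_real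
  rwa [div_eq_inv_mul, ofReal_mul (by positivity), ofReal_pow (by positivity),
    ofReal_mul toReal_nonneg, ofReal_toReal t_lt.ne, ofReal_toReal ts_lt.ne] at Lam0_ge

theorem ofReal_mul_pow_mul_le_pow {k : ℕ} {c ε : ℝ} {x L I : ℝ≥0∞} (hc : 0 ≤ c) (hε : 0 ≤ ε)
    (hL : ENNReal.ofReal c * x ≤ L ^ k) (hI : ENNReal.ofReal ε * L ≤ I) :
    ENNReal.ofReal (c * ε ^ k) * x ≤ I ^ k :=
  calc ENNReal.ofReal (c * ε ^ k) * x = ENNReal.ofReal ε ^ k * (ENNReal.ofReal c * x) := by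
        rw [ofReal_mul hc, ofReal_pow hε]
        ring
    _ ≤ ENNReal.ofReal ε ^ k * L ^ k := by gcongr
    _ = (ENNReal.ofReal ε * L) ^ k := (mul_pow ..).symm
    _ ≤ I ^ k := by gcongr

theorem le_one_of_ofReal_mul_Lam0_le {E Es : Set (Pt n)} {ε : ℝ} (hE : MeasurableSet E)
    (hEs : MeasurableSet Es) (E_lt : volume E < ⊤)
    (Lam0_ne_zero : Lam0 n (volume E) (volume Es) ≠ 0)
    (hquasi : ENNReal.ofReal ε * Lam0 n (volume E) (volume Es) ≤ incT0 n E Es) : ε ≤ 1 := by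
  rw [← ofReal_le_one, ← ENNReal.mul_le_mul_iff_left Lam0_ne_zero (Lam0_lt_top E_lt _).ne, one_mul]
  exact hquasi.trans (incT0_le_Lam0 hE hEs)

end Knapp

/-- quasiextremal pairs for `Λ₀` with weakly comparable measures
`|E| ≥ c|E*|^d`, `|E*| ≥ c|E|^d` interact strongly with projections of a ball. -/
theorem stmt5 (d : ℕ) (hd : 2 ≤ d) (c : ℝ) (hc : 0 < c) :
    ∃ C A : ℝ, 0 < C ∧ 0 < A ∧
      ∀ (ε : ℝ), 0 < ε →
      ∀ (E Es : Set (Pt (d - 1))), MeasurableSet E → MeasurableSet Es →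
        0 < volume E → volume E < ⊤ → 0 < volume Es → volume Es < ⊤ →
        ENNReal.ofReal c * volume Es ^ d ≤ volume E →
        ENNReal.ofReal c * volume E ^ d ≤ volume Es →
        ENNReal.ofReal ε * Lam0 (d - 1) (volume E) (volume Es) ≤ incT0 (d - 1) E Es →
        ∃ (zb : Pt (d - 1) × Pt (d - 1)) (e : Fin (d - 1) → Vec (d - 1))
          (r rs : Fin (d - 1) → ℝ) (ρ : ℝ),
          IsBallParams (d - 1) zb e r rs ρ ∧
          ENNReal.ofReal (C⁻¹ * ε ^ A) * incT0 (d - 1) E Es ≤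
            incT0 (d - 1) (E ∩ Prod.fst '' ballI (d - 1) zb e r rs ρ)
              (Es ∩ Prod.snd '' ballI (d - 1) zb e r rs ρ) ∧
          volume (Prod.fst '' ballI (d - 1) zb e r rs ρ) ≤ ENNReal.ofReal C * volume E ∧
          volume (Prod.snd '' ballI (d - 1) zb e r rs ρ) ≤ ENNReal.ofReal C * volume Es := by
  obtain ⟨n, rfl⟩ : ∃ n, d = n + 1 := ⟨d - 1, by omega⟩
  simp only [Nat.add_sub_cancel]
  obtain ⟨C, C_pos, A, A_pos, exists_ball⟩ := exists_ballI_incT0_ge (n := n) (by omega)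
  obtain ⟨c', c'_pos, c'_le_one, Lam0_ge⟩ := exists_mul_pow_le_Lam0_pow (n := n) (by omega) hc
  refine ⟨C / c' ^ A, ((n + 2) * A : ℕ), by positivity, by positivity, ?_⟩
  intro ε hε E Es hE hEs E_pos E_lt Es_pos Es_lt hEsE hEEs hquasi
  have Lam0_ge := Lam0_ge _ _ E_pos E_lt Es_pos Es_lt hEsE hEEs
  have Lam0_ne_zero : Lam0 n (volume E) (volume Es) ≠ 0 :=
    (pow_ne_zero_iff (n + 1).succ_ne_zero).1 (Lam0_ge.trans_lt' (by positivity)).ne'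
  have ε_le_one := le_one_of_ofReal_mul_Lam0_le hE hEs E_lt Lam0_ne_zero hquasi
  obtain ⟨zb, e, r, rs, ρ, isBallParams, inc_ge, volume_fst_le, volume_snd_le⟩ :=
    exists_ball E Es (c' * ε ^ (n + 2)) hE hEs E_pos E_lt Es_pos Es_lt (by positivity)
      (mul_le_one₀ c'_le_one (by positivity) (pow_le_one₀ hε.le ε_le_one))
      (ofReal_mul_pow_mul_le_pow c'_pos.le hε.le Lam0_ge hquasi)
  have C_le : C ≤ C / c' ^ A :=
    le_div_self C_pos.le (by positivity) (pow_le_one₀ c'_pos.le c'_le_one)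
  have constant_eq : (C / c' ^ A)⁻¹ * ε ^ (((n + 2) * A : ℕ) : ℝ) =
      C⁻¹ * (c' * ε ^ (n + 2)) ^ A := by
    rw [Real.rpow_natCast, mul_pow, ← pow_mul, inv_div, div_eq_inv_mul, mul_assoc]
  exact ⟨zb, e, r, rs, ρ, isBallParams, constant_eq ▸ inc_ge, volume_fst_le.trans (by gcongr),
    volume_snd_le.trans (by gcongr)⟩
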